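/- arXiv:2408.05730 — 12 statements merged into one kernel-verified Lean document; each statement's English description precedes it below -/
import Mathlib

section
/- Let m ≥ 1 and k ≥ 1 be integers and let T : (Fin k → Fin m) → ℝ be a nonzero vector. Then, with respect to the k-fold product of the uniform probability measure μ_m on the unit sphere of ℝ^m, the set of k-tuples (v₁, …, v_k) of unit vectors in ℝ^m satisfying ∑_{f : Fin k → Fin m} T(f) · ∏_{i} v_i(f(i)) = 0 (i.e., such that T is orthogonal to the tensor product ⊗ᵢ vᵢ) is a null set. In particular, a tuple of k independent uniformly random unit vectors almost surely has its tensor product not orthogonal to T. -/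
/-! The form `v ↦ ∑ f, T f * ∏ i, vᵢ (f i)` is multilinear, so the claim follows by induction on `k`
(trivially true at `k = 0`) from the linear case: a hyperplane through the origin meets the sphere in a null set
(`uniformSphere_hyperplane`), because the cone over that intersection lies in a proper subspace
of `ℝ^m`, which is Lebesgue-null. For the inductive step (`pi_null_of_linear_null`), contract `T`
with the first vector `u`. The contracted tensor has a nonzero coordinate for almost every `u`,
since such a coordinate is a nonzero linear form in `u`; Fubini then reduces to the induction
hypothesis applied to the contracted tensor. -/

open MeasureTheory Metric

/-- The uniform (rotation-invariant) probability measure on the unit sphere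
`S^{m-1} ⊂ ℝ^m`, obtained by normalising the spherical measure induced by the
Lebesgue measure on `EuclideanSpace ℝ (Fin m)`. -/
noncomputable def uniformSphere (m : ℕ) :
    Measure (sphere (0 : EuclideanSpace ℝ (Fin m)) 1) :=
  ((volume : Measure (EuclideanSpace ℝ (Fin m))).toSphere Set.univ)⁻¹ •
    (volume : Measure (EuclideanSpace ℝ (Fin m))).toSphere

lemma uniformSphere_hyperplane (m : ℕ) (a : Fin m → ℝ) (ha : a ≠ 0) :
    uniformSphere m {v | ∑ j, a j * (v : EuclideanSpace ℝ (Fin m)) j = 0} = 0 := by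
  have hmeas : MeasurableSet {v : sphere (0 : EuclideanSpace ℝ (Fin m)) 1 |
      ∑ j, a j * (v : EuclideanSpace ℝ (Fin m)) j = 0} := by
    refine (isClosed_eq ?_ continuous_const).measurableSet
    fun_prop
  let L : EuclideanSpace ℝ (Fin m) →ₗ[ℝ] ℝ :=
    { toFun := fun v => ∑ j, a j * v j
      map_add' := fun x y => by simp [mul_add, Finset.sum_add_distrib]
      map_smul' := fun c x => by
        simp only [PiLp.smul_apply, smul_eq_mul, RingHom.id_apply, Finset.mul_sum]
        exact Finset.sum_congr rfl fun j _ => by ring }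
  have hL : L.ker ≠ ⊤ := by
    intro h
    apply ha
    funext j
    have h1 : L (EuclideanSpace.single j 1) = 0 := by
      rw [LinearMap.ker_eq_top.mp h]; rfl
    simpa [L] using h1
  have h0 := Measure.addHaar_submodule (volume : Measure (EuclideanSpace ℝ (Fin m))) L.ker hL
  simp only [uniformSphere, Measure.smul_apply, smul_eq_mul]
  rw [Measure.toSphere_apply' _ hmeas, measure_mono_null _ h0, mul_zero, mul_zero]
  rintro _ ⟨r, -, _, ⟨v, hv, rfl⟩, rfl⟩
  have hv' : L (v : EuclideanSpace ℝ (Fin m)) = 0 := hv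
  simp [hv']

/-- For `m = 0` the sphere is empty and the normalising factor is `0⁻¹ = ∞`; for `m ≥ 1` the factor
is finite. -/
lemma isFiniteMeasure_uniformSphere (m : ℕ) (hm : 1 ≤ m) :
    IsFiniteMeasure (uniformSphere m) := by
  have hne : (volume : Measure (EuclideanSpace ℝ (Fin m))).toSphere Set.univ ≠ 0 := by
    rw [Ne, Measure.measure_univ_eq_zero, Measure.toSphere_eq_zero_iff_finrank]
    simp
    omega
  refine ⟨?_⟩
  simp only [uniformSphere, Measure.smul_apply, smul_eq_mul]
  exact ENNReal.mul_lt_top (ENNReal.inv_lt_top.mpr (pos_iff_ne_zero.mpr hne)) (measure_lt_top _ _)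

/-- If a random vector `x` in `ℝ^m` almost surely avoids each hyperplane through the origin, then
the tensor product of `k` independent copies of `x` almost surely avoids each hyperplane through
the origin of `(ℝ^m)^{⊗k}`. -/
lemma pi_null_of_linear_null {X : Type*} [MeasurableSpace X] (μ : Measure X) [SigmaFinite μ]
    {m : ℕ} (x : X → Fin m → ℝ) (hx : ∀ j, Measurable fun v => x v j)
    (hμ : ∀ a : Fin m → ℝ, a ≠ 0 → μ {v | ∑ j, a j * x v j = 0} = 0)
    (k : ℕ) (T : (Fin k → Fin m) → ℝ) (hT : T ≠ 0) :
    Measure.pi (fun _ : Fin k => μ)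
      {v : Fin k → X | ∑ f : Fin k → Fin m, T f * ∏ i, x (v i) (f i) = 0} = 0 := by
  induction k with
  | zero =>
    obtain ⟨f, hf⟩ := Function.ne_iff.mp hT
    rw [Subsingleton.elim f default] at hf
    have hf0 : T default ≠ 0 := hf
    simp [hf0]
  | succ k ih =>
    obtain ⟨f, hf⟩ := Function.ne_iff.mp hT
    -- the contraction of `T` with the first vector
    let C : X → (Fin k → Fin m) → ℝ := fun u g => ∑ j, T (Fin.cons j g) * x u j
    have hC : ∀ᵐ u ∂μ, C u ≠ 0 := by
      have h1 := hμ (fun j => T (Fin.cons j (Fin.tail f))) (by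
        intro h
        apply hf
        simpa using congrFun h (f 0))
      filter_upwards [measure_eq_zero_iff_ae_notMem.mp h1] with u hu h
      exact hu (congrFun h (Fin.tail f))
    let S : Set (X × (Fin k → X)) :=
      {p | ∑ g : Fin k → Fin m, C p.1 g * ∏ i, x (p.2 i) (g i) = 0}
    have hS : MeasurableSet S := by
      refine measurableSet_eq_fun ?_ measurable_const
      refine Finset.measurable_sum _ fun g _ => Measurable.mul ?_ ?_
      · exact Finset.measurable_sum _ fun j _ => ((hx j).comp measurable_fst).const_mul _
      · exact Finset.measurable_prod _ fun i _ =>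
          (hx (g i)).comp ((measurable_pi_apply i).comp measurable_snd)
    have hS0 : (μ.prod (Measure.pi fun _ : Fin k => μ)) S = 0 := by
      rw [Measure.measure_prod_null hS]
      filter_upwards [hC] with u hu
      exact ih (C u) hu
    have hmp := measurePreserving_piFinSuccAbove (fun _ : Fin (k + 1) => μ) 0
    rw [← hmp.measure_preimage hS.nullMeasurableSet] at hS0
    refine measure_mono_null (fun v hv => ?_) hS0
    change ∑ g : Fin k → Fin m, C (v 0) g * ∏ i, x (v ((0 : Fin (k + 1)).succAbove i)) (g i) = 0
    rw [← hv.out, ← (Fin.consEquiv fun _ : Fin (k + 1) => Fin m).sum_comp,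
      Fintype.sum_prod_type_right]
    refine Finset.sum_congr rfl fun g _ => ?_
    simp only [C, Finset.sum_mul]
    refine Finset.sum_congr rfl fun j _ => ?_
    simp [Fin.consEquiv, Fin.prod_univ_succ, mul_assoc]

/-- If `T ≠ 0`, then with respect to the `k`-fold product of the uniform probability
measure on the unit sphere of `ℝ^m`, almost every tuple `(v₁, …, v_k)` of unit vectors
has its tensor product `⊗ᵢ vᵢ` not orthogonal to `T`: the set where
`∑ f, T f * ∏ i, vᵢ (f i) = 0` is a null set. -/
theorem orth_tensor_null (m k : ℕ) (hm : 1 ≤ m) (hk : 1 ≤ k)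
    (T : (Fin k → Fin m) → ℝ) (hT : T ≠ 0) :
    Measure.pi (fun _ : Fin k => uniformSphere m)
      {v : Fin k → sphere (0 : EuclideanSpace ℝ (Fin m)) 1 |
        ∑ f : Fin k → Fin m, T f * ∏ i : Fin k,
          (v i : EuclideanSpace ℝ (Fin m)) (f i) = 0} = 0 := by
  have := isFiniteMeasure_uniformSphere m hm
  exact pi_null_of_linear_null (uniformSphere m)
    (fun v j => (v : EuclideanSpace ℝ (Fin m)) j)
    (fun j => Continuous.measurable (by fun_prop)) (uniformSphere_hyperplane m) k T hT
end

section
/- Let m ≥ 1 and k ≥ 1 be integers. Consider a family of unit vectors v_α^{(i)} ∈ ℝ^m indexed by α ∈ Fin (m^k) and i ∈ Fin k, drawn according to the (m^k · k)-fold product of the uniform probability measure μ_m on the unit sphere of ℝ^m. Then almost surely the m^k tensor product vectors w_α ∈ ℝ^{(Fin k → Fin m)}, defined by w_α(f) = ∏_{i} v_α^{(i)}(f(i)) for f : Fin k → Fin m, are linearly independent, i.e., they span the whole m^k-dimensional space ℝ^{(Fin k → Fin m)}. Equivalently, the set of tuples (v_α^{(i)}) for which these m^k vectors fail to form a basis is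 a null set for the product measure. -/
/-!
The `m ^ k` tensor products form a basis exactly when the determinant of their matrix of coordinates
is nonzero. That determinant is a *multilinear* function of all the vectors `v_α^{(i)}` together
(`detTensor`), and it is not identically zero: if the vectors are standard basis vectors chosen so
that the tensor products enumerate the standard basis, it equals one.

So it suffices that a nonzero multilinear function is almost surely nonzero when its arguments are
drawn independently from a law that does not charge proper subspaces (`multilinear_ae_ne_zero`).
By Fubini this follows one variable at a time: the first arguments for which the curried map vanishes
form the kernel of a nonzero linear map, hence a proper subspace. The uniform law on the sphere has
this property (`uniformSphere_submodule`), because the cone over a part of a proper subspace is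
contained in that subspace, which is Lebesgue-null.
-/

open MeasureTheory Metric

open scoped Pointwise in
/-- The cone over the trace of a proper subspace on the sphere lies in that subspace, so the trace
is null for the uniform measure. -/
lemma uniformSphere_submodule {m : ℕ} (W : Submodule ℝ (EuclideanSpace ℝ (Fin m))) (hW : W ≠ ⊤) :
    uniformSphere m {x | (x : EuclideanSpace ℝ (Fin m)) ∈ W} = 0 := by
  have hmeas : MeasurableSet {x : sphere (0 : EuclideanSpace ℝ (Fin m)) 1 |
      (x : EuclideanSpace ℝ (Fin m)) ∈ W} :=
    measurable_subtype_coe W.closed_of_finiteDimensional.measurableSet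
  rw [uniformSphere, Measure.smul_apply, Measure.toSphere_apply' _ hmeas]
  have h0 : (volume : Measure (EuclideanSpace ℝ (Fin m)))
      (Set.Ioo (0 : ℝ) 1 • (Subtype.val '' {x : sphere (0 : EuclideanSpace ℝ (Fin m)) 1 |
        (x : EuclideanSpace ℝ (Fin m)) ∈ W})) = 0 := by
    refine measure_mono_null ?_ (Measure.addHaar_submodule volume W hW)
    rintro _ ⟨r, -, _, ⟨x, hx, rfl⟩, rfl⟩
    exact W.smul_mem r hx
  rw [h0, mul_zero, smul_zero]

/-- For `1 ≤ m` the total mass being normalized is nonzero, so the normalizing factor is finite. -/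
lemma uniformSphere_isFiniteMeasure {m : ℕ} (hm : 1 ≤ m) : IsFiniteMeasure (uniformSphere m) := by
  have : Nontrivial (EuclideanSpace ℝ (Fin m)) := by
    have : Nonempty (Fin m) := ⟨⟨0, hm⟩⟩
    infer_instance
  have h : (volume : Measure (EuclideanSpace ℝ (Fin m))).toSphere Set.univ ≠ 0 := by
    rw [Measure.measure_univ_ne_zero]
    exact Measure.toSphere_ne_zero _
  exact Measure.smul_finite _ (ENNReal.inv_ne_top.2 h)

lemma continuous_multilinear {ι E : Type*} [Fintype ι] [NormedAddCommGroup E] [NormedSpace ℝ E]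
    [FiniteDimensional ℝ E] (f : MultilinearMap ℝ (fun _ : ι => E) ℝ) : Continuous f := by
  classical
  let b := Module.finBasis ℝ E
  -- Expanding each argument in a basis shows that `f` is a polynomial in the coordinates.
  have h : (f : (ι → E) → ℝ) = fun v =>
      ∑ r : ι → Fin (Module.finrank ℝ E), (∏ i, b.equivFun (v i) (r i)) • f (fun i => b (r i)) := by
    ext v
    conv_lhs => rw [show v = fun i => ∑ j, b.equivFun (v i) j • b j from
      funext fun i => (b.sum_equivFun (v i)).symm]
    rw [MultilinearMap.map_sum]
    exact Finset.sum_congr rfl fun r _ => f.map_smul_univ _ _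
  rw [h]
  have hb : Continuous b.equivFun := b.equivFun.toLinearMap.continuous_of_finiteDimensional
  refine continuous_finsetSum _ fun r _ => Continuous.fun_smul
    (continuous_finsetProd _ fun i _ => ?_) continuous_const
  exact (continuous_apply (r i)).comp (hb.comp (continuous_apply i))

/-- A nonzero multilinear function of finitely many independent variables, each with a law that
gives mass zero to proper subspaces, is almost surely nonzero. Proved by peeling off the first
variable with Fubini. -/
lemma multilinear_ae_ne_zero_fin {X E : Type*} [MeasurableSpace X] [NormedAddCommGroup E]
    [NormedSpace ℝ E] [FiniteDimensional ℝ E] [MeasurableSpace E] [BorelSpace E]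
    (ν : Measure X) [SigmaFinite ν] (c : X → E) (hc : Measurable c)
    (hν : ∀ W : Submodule ℝ E, W ≠ ⊤ → ν {x | c x ∈ W} = 0) (n : ℕ)
    (f : MultilinearMap ℝ (fun _ : Fin n => E) ℝ) (hf : f ≠ 0) :
    ∀ᵐ v ∂(Measure.pi fun _ : Fin n => ν), f (fun i => c (v i)) ≠ 0 := by
  have : ProperSpace E := FiniteDimensional.proper_real E
  induction n with
  | zero =>
    refine ae_of_all _ fun v h => hf ?_
    ext w
    rw [Subsingleton.elim w (fun i => c (v i)), h]
    rfl
  | succ n ih =>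
    have hmeas : MeasurableSet {v : Fin (n + 1) → X | f (fun i => c (v i)) ≠ 0} := by
      have hcont : Continuous f := continuous_multilinear f
      have : Measurable fun v : Fin (n + 1) → X => f (fun i => c (v i)) :=
        hcont.measurable.comp
          (measurable_pi_lambda _ fun i => hc.comp (measurable_pi_apply i))
      exact this (measurableSet_singleton (0 : ℝ)).compl
    have hker : LinearMap.ker f.curryLeft ≠ ⊤ := by
      intro h
      rw [LinearMap.ker_eq_top] at h
      apply hf
      ext v
      rw [← Fin.cons_self_tail v, ← MultilinearMap.curryLeft_apply, h]
      rfl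
    have mp := (measurePreserving_piFinSuccAbove (fun _ : Fin (n + 1) => ν) 0).symm
    rw [← mp.map_eq, ae_map_iff mp.measurable.aemeasurable hmeas,
      Measure.ae_prod_iff_ae_ae (by exact mp.measurable hmeas)]
    have h1 : ∀ᵐ x ∂ν, c x ∉ LinearMap.ker f.curryLeft := by
      rw [ae_iff]
      simpa using hν _ hker
    filter_upwards [h1] with x hx
    filter_upwards [ih (f.curryLeft (c x)) hx] with v hv
    rw [MultilinearMap.curryLeft_apply] at hv
    convert hv using 2
    ext i
    refine Fin.cases ?_ (fun j => ?_) i <;> simp [MeasurableEquiv.piFinSuccAbove]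

/-- `multilinear_ae_ne_zero_fin` for an arbitrary finite index type. -/
lemma multilinear_ae_ne_zero {ι X E : Type*} [Fintype ι] [MeasurableSpace X]
    [NormedAddCommGroup E]
    [NormedSpace ℝ E] [FiniteDimensional ℝ E] [MeasurableSpace E] [BorelSpace E]
    (ν : Measure X) [SigmaFinite ν] (c : X → E) (hc : Measurable c)
    (hν : ∀ W : Submodule ℝ E, W ≠ ⊤ → ν {x | c x ∈ W} = 0)
    (f : MultilinearMap ℝ (fun _ : ι => E) ℝ) (hf : f ≠ 0) :
    ∀ᵐ v ∂(Measure.pi fun _ : ι => ν), f (fun i => c (v i)) ≠ 0 := by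
  let e := Fintype.equivFin ι
  have hf' : f.domDomCongr e ≠ 0 := by
    intro h
    apply hf
    ext v
    have : f (fun i => v (e.symm (e i))) = 0 := DFunLike.congr_fun h (fun i => v (e.symm i))
    rwa [show (fun i => v (e.symm (e i))) = v from
      funext fun i => congrArg v (e.symm_apply_apply i)] at this
  have mp := measurePreserving_piCongrLeft (fun _ : Fin (Fintype.card ι) => ν) e
  have h := mp.quasiMeasurePreserving.ae
    (multilinear_ae_ne_zero_fin ν c hc hν _ (f.domDomCongr e) hf')
  filter_upwards [h] with v hv
  rw [MultilinearMap.domDomCongr_apply] at hv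
  convert hv using 4 with i
  exact (Equiv.piCongrLeft_apply_apply (fun _ : Fin (Fintype.card ι) => X) e v i).symm

/-- The determinant of the coordinate matrix of the tensor products `⊗ᵢ v_α^{(i)}`, as a multilinear
function of all the vectors `v_α^{(i)}`, given by the Leibniz expansion. The coordinates
`f : Fin k → Fin m` are enumerated by `finFunctionFinEquiv`, which makes the matrix square. -/
noncomputable def detTensor (m k : ℕ) :
    MultilinearMap ℝ (fun _ : Fin (m ^ k) × Fin k => EuclideanSpace ℝ (Fin m)) ℝ :=
  ∑ τ : Equiv.Perm (Fin (m ^ k)), (Equiv.Perm.sign τ : ℤ) •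
    (MultilinearMap.mkPiAlgebra ℝ (Fin (m ^ k) × Fin k) ℝ).compLinearMap
      (fun p => EuclideanSpace.projₗ (finFunctionFinEquiv.symm (τ p.1) p.2))

lemma detTensor_apply (m k : ℕ) (v : Fin (m ^ k) × Fin k → EuclideanSpace ℝ (Fin m)) :
    detTensor m k v = Matrix.det (Matrix.of fun α β : Fin (m ^ k) =>
      ∏ i : Fin k, v (α, i) (finFunctionFinEquiv.symm β i)) := by
  rw [← Matrix.det_transpose, Matrix.det_apply]
  simp [detTensor, Fintype.prod_prod_type, Units.smul_def]

lemma detTensor_ne_zero (m k : ℕ) : detTensor m k ≠ 0 := by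
  intro h
  -- With these standard basis vectors the coordinate matrix is the identity.
  have h1 := detTensor_apply m k
    (fun p => EuclideanSpace.single (finFunctionFinEquiv.symm p.1 p.2) (1 : ℝ))
  have h2 : (Matrix.of fun α β : Fin (m ^ k) => ∏ i : Fin k,
      (EuclideanSpace.single (finFunctionFinEquiv.symm α i) (1 : ℝ) : EuclideanSpace ℝ (Fin m))
        (finFunctionFinEquiv.symm β i)) = 1 := by
    ext α β
    rw [Matrix.of_apply, Matrix.one_apply]
    split_ifs with hab
    · subst hab
      simp
    · have hne : finFunctionFinEquiv.symm β ≠ finFunctionFinEquiv.symm α :=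
        fun h => hab (finFunctionFinEquiv.symm.injective h).symm
      obtain ⟨i, hi⟩ := Function.ne_iff.1 hne
      exact Finset.prod_eq_zero (Finset.mem_univ i) (by simp [hi])
  rw [h, h2] at h1
  simp at h1

/-- The determinant criterion: the tensor products form a basis when `detTensor` does not vanish. -/
lemma basis_of_detTensor_ne_zero (m k : ℕ) (v : Fin (m ^ k) × Fin k → EuclideanSpace ℝ (Fin m))
    (h : detTensor m k v ≠ 0) :
    LinearIndependent ℝ (fun α : Fin (m ^ k) =>
        (fun f : Fin k → Fin m => ∏ i : Fin k, v (α, i) (f i))) ∧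
      Submodule.span ℝ (Set.range (fun α : Fin (m ^ k) =>
        (fun f : Fin k → Fin m => ∏ i : Fin k, v (α, i) (f i)))) = ⊤ := by
  rw [detTensor_apply, ← isUnit_iff_ne_zero, ← Matrix.isUnit_iff_isUnit_det,
    ← Matrix.linearIndependent_rows_iff_isUnit] at h
  have hli : LinearIndependent ℝ (fun α : Fin (m ^ k) =>
      (fun f : Fin k → Fin m => ∏ i : Fin k, v (α, i) (f i))) :=
    LinearIndependent.of_comp (LinearMap.funLeft ℝ ℝ finFunctionFinEquiv.symm) h
  exact ⟨hli, hli.span_eq_top_of_card_eq_finrank' (by simp)⟩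

/-- For unit vectors `v_α^{(i)}` (`α ∈ Fin (m^k)`, `i ∈ Fin k`) drawn according to the
product of uniform measures on the unit sphere of `ℝ^m`, almost surely the `m^k`
tensor products `w_α (f) = ∏ i, v_α^{(i)} (f i)` form a basis of `ℝ^{(Fin k → Fin m)}`:
the set of tuples where they fail to be linearly independent and spanning is null. -/
theorem random_tensor_products_basis (m k : ℕ) (hm : 1 ≤ m) (hk : 1 ≤ k) :
    Measure.pi (fun _ : Fin (m ^ k) × Fin k => uniformSphere m)
      {v : Fin (m ^ k) × Fin k → sphere (0 : EuclideanSpace ℝ (Fin m)) 1 |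
        ¬ (LinearIndependent ℝ (fun α : Fin (m ^ k) =>
              (fun f : Fin k → Fin m => ∏ i : Fin k,
                (v (α, i) : EuclideanSpace ℝ (Fin m)) (f i))) ∧
           Submodule.span ℝ (Set.range (fun α : Fin (m ^ k) =>
              (fun f : Fin k → Fin m => ∏ i : Fin k,
                (v (α, i) : EuclideanSpace ℝ (Fin m)) (f i)))) = ⊤)} = 0 := by
  have := uniformSphere_isFiniteMeasure hm
  have h := multilinear_ae_ne_zero (uniformSphere m)
    (fun x => (x : EuclideanSpace ℝ (Fin m))) measurable_subtype_coe
    uniformSphere_submodule (detTensor m k) (detTensor_ne_zero m k)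
  exact measure_mono_null
    (fun v hv hdet => hv (basis_of_detTensor_ne_zero m k (fun p => v p) hdet)) h
end

section
/- For all integers n ≥ k ≥ 1 and m ≥ 1, there exist unit vectors v_α^{(i)} ∈ ℝ^m, indexed by α ∈ Fin (m^k) and i ∈ Fin n, such that for every k-element subset {i₁ < … < i_k} of Fin n, the m^k vectors in ℝ^{(Fin k → Fin m)} whose coordinate at f : Fin k → Fin m equals ∏_{j ∈ Fin k} v_α^{(i_j)}(f(j)) (one vector for each α) form a basis of ℝ^{(Fin k → Fin m)}. In particular, k-body overlapping tomography of an n-qudit system of local dimension d can be performed with (d² − 1)^k measurement settings, independently of n (taking m = d² − 1). -/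
/-!
The vectors can be given explicitly. Let `v_α^{(i)}` be the normalization of the vector with
coordinates `(2 ^ (m ^ i * a)) ^ α`, `a = 0, …, m - 1`. For an injective `ι`, the `f`-coordinate of
the tensor product of the unnormalized vectors along `ι` is `(2 ^ e f) ^ α` with
`e f = ∑ j, f j * m ^ (ι j)`. A number determines its digits in base `m`, so the exponents `e f` are
pairwise distinct, and hence so are the nodes `2 ^ e f`. The `m ^ k` tensor products are therefore
the columns of a Vandermonde matrix with distinct nodes, which is invertible; normalization only
rescales these columns by nonzero factors.
-/

/-- A number determines its base-`m` digits, here those in the positions `ι j`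
(all other digits being zero). -/
lemma sum_digits_injective {n k m : ℕ} (hm : 1 ≤ m) {ι : Fin k → Fin n}
    (hι : Function.Injective ι) :
    Function.Injective (fun f : Fin k → Fin m => ∑ j, (f j : ℕ) * m ^ (ι j : ℕ)) := by
  have : NeZero m := ⟨by omega⟩
  have key : ∀ f : Fin k → Fin m, ∑ j, (f j : ℕ) * m ^ (ι j : ℕ) =
      (finFunctionFinEquiv (Function.extend ι f 0) : ℕ) := by
    intro f
    rw [finFunctionFinEquiv_apply]
    refine Fintype.sum_of_injective ι hι _ _ (fun i hi => ?_) (fun j => ?_)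
    · rw [Function.extend_apply' _ _ _ (by simpa using hi)]
      simp
    · rw [hι.extend_apply]
  intro f g hfg
  simp only [key] at hfg
  have h := finFunctionFinEquiv.injective (Fin.ext hfg)
  funext j
  simpa [hι.extend_apply] using congrFun h (ι j)

/-- The unnormalized vector `v_α^{(i)}`, with coordinates `(2 ^ (m ^ i * a)) ^ α`. -/
noncomputable def rawDir (m α i : ℕ) : EuclideanSpace ℝ (Fin m) :=
  WithLp.toLp 2 fun a => ((2 : ℝ) ^ ((a : ℕ) * m ^ i)) ^ α

lemma rawDir_ne_zero {m : ℕ} (hm : 1 ≤ m) (α i : ℕ) : rawDir m α i ≠ 0 := by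
  intro h
  have h0 := congrArg (fun x : EuclideanSpace ℝ (Fin m) => x ⟨0, hm⟩) h
  simp [rawDir] at h0


/-- For all `n ≥ k ≥ 1` and `m ≥ 1`, there exist unit vectors `v_α^{(i)} ∈ ℝ^m`
(`α ∈ Fin (m^k)`, `i ∈ Fin n`) such that for every `k`-element subset
`{i₁ < … < i_k}` of `Fin n` (encoded as a strictly monotone map `ι : Fin k → Fin n`),
the `m^k` tensor product vectors `f ↦ ∏ j, v_α^{(ι j)} (f j)` form a basis of
`ℝ^{(Fin k → Fin m)}` (they are linearly independent and spanning). In particular,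
`k`-body overlapping tomography of an `n`-qudit system of local dimension `d` can
be performed with `(d² − 1)^k` settings, independently of `n`. -/
theorem exists_tomographically_complete_directions (n k m : ℕ)
    (hk : 1 ≤ k) (hkn : k ≤ n) (hm : 1 ≤ m) :
    ∃ v : Fin (m ^ k) → Fin n → EuclideanSpace ℝ (Fin m),
      (∀ α i, ‖v α i‖ = 1) ∧
      ∀ ι : Fin k → Fin n, StrictMono ι →
        LinearIndependent ℝ (fun α : Fin (m ^ k) =>
          (fun f : Fin k → Fin m => ∏ j : Fin k, v α (ι j) (f j))) ∧
        Submodule.span ℝ (Set.range (fun α : Fin (m ^ k) =>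
          (fun f : Fin k → Fin m => ∏ j : Fin k, v α (ι j) (f j)))) = ⊤ := by
  refine ⟨fun α i => ‖rawDir m α i‖⁻¹ • rawDir m α i, fun α i => ?_, fun ι hι => ?_⟩
  · exact norm_smul_inv_norm (𝕜 := ℝ) (rawDir_ne_zero hm α i)
  have hli : LinearIndependent ℝ (fun α : Fin (m ^ k) => (fun f : Fin k → Fin m =>
      ∏ j : Fin k, (‖rawDir m α (ι j)‖⁻¹ • rawDir m α (ι j)) (f j))) := by
    rw [Fintype.linearIndependent_iff]
    intro g hg
    set c : Fin (m ^ k) → ℝ := fun α => ∏ j : Fin k, ‖rawDir m α (ι j)‖⁻¹ with hc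
    have hc0 : ∀ α, c α ≠ 0 := fun α =>
      Finset.prod_ne_zero_iff.2 fun j _ =>
        inv_ne_zero (norm_ne_zero_iff.2 (rawDir_ne_zero hm α (ι j)))
    let e : (Fin k → Fin m) ≃ Fin (m ^ k) := finFunctionFinEquiv
    let w : Fin (m ^ k) → ℝ := fun p => 2 ^ (∑ j, (e.symm p j : ℕ) * m ^ (ι j : ℕ))
    have hw : Function.Injective w :=
      (pow_right_injective₀ (by norm_num) (by norm_num)).comp
        ((sum_digits_injective hm hι.injective).comp e.symm.injective)
    have hz := Matrix.eq_zero_of_forall_index_sum_mul_pow_eq_zero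
      (v := fun α => g α * c α) hw (fun p => by
        have h := congrFun hg (e.symm p)
        simp only [Finset.sum_apply, Pi.smul_apply, smul_eq_mul, PiLp.smul_apply,
          Finset.prod_mul_distrib, Pi.zero_apply] at h
        rw [← h]
        refine Finset.sum_congr rfl fun α _ => ?_
        simp only [w, hc, rawDir, Finset.prod_pow, Finset.prod_pow_eq_pow_sum]
        ring)
    intro α
    exact (mul_eq_zero.1 (congrFun hz α)).resolve_right (hc0 α)
  exact ⟨hli, hli.span_eq_top_of_card_eq_finrank' (by simp)⟩
end

section
/- For all integers n₁, n₂ ≥ 2, the minimal numbers of Pauli settings for two-body overlapping tomography satisfy the recursion bound φ₂(n₁ · n₂) ≤ φ₂(n₁) + φ₂(n₂) − 1. -/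
/-!
Identify the `n₁ * n₂` vertices with the pairs `(i, j)`. Pulling Pauli sets for `n₁` and `n₂`
vertices back along the two projections gives a Pauli set for the pairs, since distinct pairs
differ in some coordinate; this costs `φ₂(n₁) + φ₂(n₂)` assignments. One assignment is saved as
follows: relabelling the three values separately at each vertex preserves the Pauli property, so
both sets may be assumed to contain the zero assignment (translate by a fixed member). The two
pullbacks then share the zero assignment.
-/

/-- A Pauli set for a simple graph `G`: a finite set `S` of assignments of a Pauli
operator (an element of `Fin 3`) to each vertex, such that for every edge `{i, j}`
of `G` and every pair of values `(a, b)` some `f ∈ S` has `f i = a` and `f j = b`. -/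
def IsPauliSet {V : Type*} (G : SimpleGraph V) (S : Finset (V → Fin 3)) : Prop :=
  ∀ i j : V, G.Adj i j → ∀ a b : Fin 3, ∃ f ∈ S, f i = a ∧ f j = b

/-- `phi2G G` is the minimum cardinality of a Pauli set for `G`. -/
noncomputable def phi2G {V : Type*} (G : SimpleGraph V) : ℕ :=
  sInf {N : ℕ | ∃ S : Finset (V → Fin 3), S.card = N ∧ IsPauliSet G S}

/-- `phi2 n` is `phi2G` of the complete graph on `n` vertices: the minimal number of
Pauli settings for two-body overlapping tomography of `n` qubits. -/
noncomputable def phi2 (n : ℕ) : ℕ := phi2G (⊤ : SimpleGraph (Fin n))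

theorem exists_isPauliSet_card_eq_phi2 (n : ℕ) :
    ∃ S : Finset (Fin n → Fin 3), S.card = phi2 n ∧ IsPauliSet ⊤ S := by
  refine Nat.sInf_mem (s := {N : ℕ | ∃ S : Finset (Fin n → Fin 3),
    S.card = N ∧ IsPauliSet ⊤ S}) ⟨_, Finset.univ, rfl, fun i j hij a b => ?_⟩
  have hne : j ≠ i := hij.ne'
  exact ⟨fun k => if k = i then a else b, Finset.mem_univ _, by simp, by simp [hne]⟩

/-- A Pauli set on `n ≥ 2` vertices, translated by one of its members so as to contain `0`. -/
theorem exists_isPauliSet_zero_mem (n : ℕ) (hn : 2 ≤ n) :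
    ∃ S : Finset (Fin n → Fin 3), S.card ≤ phi2 n ∧ IsPauliSet ⊤ S ∧ 0 ∈ S := by
  classical
  obtain ⟨S, hc, hS⟩ := exists_isPauliSet_card_eq_phi2 n
  -- The edge `{0, 1}` forces a Pauli set to be nonempty.
  obtain ⟨f₀, hf₀, -⟩ := hS ⟨0, by omega⟩ ⟨1, by omega⟩ (by simp) 0 0
  refine ⟨S.image (· - f₀), hc ▸ Finset.card_image_le, fun i j hij a b => ?_,
    Finset.mem_image.2 ⟨f₀, hf₀, sub_self _⟩⟩
  obtain ⟨f, hf, ha, hb⟩ := hS i j hij (a + f₀ i) (b + f₀ j)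
  exact ⟨f - f₀, Finset.mem_image_of_mem _ hf, by simp [ha], by simp [hb]⟩

/-- Recursion bound for covering arrays / Pauli sets:
`φ₂(n₁ n₂) ≤ φ₂(n₁) + φ₂(n₂) − 1` for all `n₁, n₂ ≥ 2`. -/
theorem phi2_mul_le (n₁ n₂ : ℕ) (h₁ : 2 ≤ n₁) (h₂ : 2 ≤ n₂) :
    phi2 (n₁ * n₂) ≤ phi2 n₁ + phi2 n₂ - 1 := by
  classical
  obtain ⟨S₁, hc₁, hS₁, hz₁⟩ := exists_isPauliSet_zero_mem n₁ h₁
  obtain ⟨S₂, hc₂, hS₂, hz₂⟩ := exists_isPauliSet_zero_mem n₂ h₂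
  let e : Fin (n₁ * n₂) ≃ Fin n₁ × Fin n₂ := finProdFinEquiv.symm
  let T₁ := S₁.image fun f v => f (e v).1
  let T₂ := S₂.image fun f v => f (e v).2
  have hT₁ : T₁.card ≤ S₁.card := Finset.card_image_le
  have hT₂ : T₂.card ≤ S₂.card := Finset.card_image_le
  have hinter : 0 < (T₁ ∩ T₂).card := Finset.card_pos.2 ⟨0, Finset.mem_inter.2
    ⟨Finset.mem_image.2 ⟨0, hz₁, rfl⟩, Finset.mem_image.2 ⟨0, hz₂, rfl⟩⟩⟩
  have hle : phi2 (n₁ * n₂) ≤ (T₁ ∪ T₂).card := by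
    refine Nat.sInf_le ⟨_, rfl, fun v w hvw a b => ?_⟩
    by_cases h : (e v).1 = (e w).1
    · have h' : (e v).2 ≠ (e w).2 := fun h' => hvw.ne (e.injective (Prod.ext h h'))
      obtain ⟨f, hf, ha, hb⟩ := hS₂ _ _ ((SimpleGraph.top_adj _ _).2 h') a b
      exact ⟨_, Finset.mem_union_right _ (Finset.mem_image_of_mem _ hf), ha, hb⟩
    · obtain ⟨f, hf, ha, hb⟩ := hS₁ _ _ ((SimpleGraph.top_adj _ _).2 h) a b
      exact ⟨_, Finset.mem_union_left _ (Finset.mem_image_of_mem _ hf), ha, hb⟩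
  have hunion := Finset.card_union_add_card_inter T₁ T₂
  omega
end

section
/- For all integers α ≥ 2 and x ≥ 1, the minimal number of Pauli settings for two-body overlapping tomography satisfies φ₂(α^x) ≤ x · (φ₂(α) − 1) + 1. -/
theorem phi2G_le_card {V : Type*} {G : SimpleGraph V} {S : Finset (V → Fin 3)}
    (hS : IsPauliSet G S) : phi2G G ≤ S.card :=
  Nat.sInf_le ⟨S, rfl, hS⟩

theorem exists_isPauliSet_card_eq_phi2G {V : Type*} [Finite V] (G : SimpleGraph V) :
    ∃ S : Finset (V → Fin 3), S.card = phi2G G ∧ IsPauliSet G S := by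
  classical
  have := Fintype.ofFinite V
  refine Nat.sInf_mem (s := {N : ℕ | ∃ S : Finset (V → Fin 3), S.card = N ∧ IsPauliSet G S})
    ⟨_, Finset.univ, rfl, fun i j hij a b => ?_⟩
  exact ⟨fun v => if v = i then a else b, Finset.mem_univ _, by simp, by simp [hij.ne']⟩

/-- A minimum Pauli set may be normalized, by a translation at each vertex, to contain the
constant setting `0`. The edge is needed for the minimum Pauli set to be nonempty. -/
theorem exists_isPauliSet_zero_mem_s5 {V : Type*} [Finite V] (G : SimpleGraph V) {u v : V}
    (huv : G.Adj u v) :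
    ∃ S : Finset (V → Fin 3), S.card = phi2G G ∧ IsPauliSet G S ∧ 0 ∈ S := by
  classical
  obtain ⟨S, hcard, hS⟩ := exists_isPauliSet_card_eq_phi2G G
  obtain ⟨g, hg, -⟩ := hS u v huv 0 0
  refine ⟨S.image (fun f => f - g), ?_, ?_, Finset.mem_image.2 ⟨g, hg, sub_self g⟩⟩
  · rw [Finset.card_image_of_injective _ sub_left_injective, hcard]
  · intro i j hij a b
    obtain ⟨f, hf, hi, hj⟩ := hS i j hij (a + g i) (b + g j)
    exact ⟨f - g, Finset.mem_image_of_mem _ hf, by simp [hi], by simp [hj]⟩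

/-- For `α ≥ 2` and `x ≥ 1`, `φ₂(α^x) ≤ x (φ₂(α) − 1) + 1`. -/
theorem phi2_pow_le (α x : ℕ) (hα : 2 ≤ α) (hx : 1 ≤ x) :
    phi2 (α ^ x) ≤ x * (phi2 α - 1) + 1 := by
  classical
  obtain ⟨S, hcard, hS, h0⟩ := exists_isPauliSet_zero_mem_s5 (⊤ : SimpleGraph (Fin α))
    (u := ⟨0, by omega⟩) (v := ⟨1, by omega⟩) (by simp)
  let word : Fin (α ^ x) ≃ (Fin x → Fin α) := finFunctionFinEquiv.symm
  let pull (k : Fin x) (f : Fin α → Fin 3) : Fin (α ^ x) → Fin 3 := fun v => f (word v k)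
  let T : Finset (Fin (α ^ x) → Fin 3) :=
    insert 0 (Finset.univ.biUnion fun k => (S.erase 0).image (pull k))
  have hmem : ∀ k, ∀ f ∈ S, pull k f ∈ T := by
    intro k f hf
    by_cases hf0 : f = 0
    · subst hf0
      exact Finset.mem_insert_self 0 _
    · exact Finset.mem_insert_of_mem (Finset.mem_biUnion.2 ⟨k, Finset.mem_univ k,
        Finset.mem_image_of_mem _ (Finset.mem_erase.2 ⟨hf0, hf⟩)⟩)
  have hT : IsPauliSet (⊤ : SimpleGraph (Fin (α ^ x))) T := by
    intro i j hij a b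
    obtain ⟨k, hk⟩ := Function.ne_iff.1 (word.injective.ne hij.ne)
    obtain ⟨f, hf, hi, hj⟩ := hS (word i k) (word j k) (by simpa using hk) a b
    exact ⟨pull k f, hmem k f hf, hi, hj⟩
  have hblock : (Finset.univ.biUnion fun k => (S.erase 0).image (pull k)).card
      ≤ x * (phi2 α - 1) := by
    have h := Finset.card_biUnion_le_card_mul (Finset.univ : Finset (Fin x))
      (fun k => (S.erase 0).image (pull k)) (phi2 α - 1) fun k _ =>
        Finset.card_image_le.trans (by rw [Finset.card_erase_of_mem h0, hcard]; rfl)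
    simpa using h
  calc phi2 (α ^ x) ≤ T.card := phi2G_le_card hT
    _ ≤ _ := Finset.card_insert_le _ _
    _ ≤ x * (phi2 α - 1) + 1 := Nat.add_le_add_right hblock 1
end

section
/- Let G be a finite simple graph whose chromatic number satisfies χ(G) ≤ 4. Then φ₂(G) ≤ 9, i.e., two-body overlapping tomography of any system whose connectivity graph has chromatic number at most four (in particular, any planar connectivity graph) can always be performed with nine Pauli settings, regardless of the number of qubits. -/
/-- The orthogonal array OA(9, 4, 3, 2): the row is the point `p = (x, y)` of `𝔽₃²`, and the four
columns are the linear forms `x`, `y`, `x + y`, `x + 2y`. -/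
def planeForm (c : Fin 4) (p : Fin 3 × Fin 3) : Fin 3 :=
  ![p.1, p.2, p.1 + p.2, p.1 + 2 * p.2] c

theorem planeForm_orthogonal : ∀ c d : Fin 4, c ≠ d → ∀ a b : Fin 3,
    ∃ p, planeForm c p = a ∧ planeForm d p = b := by
  decide

/-- Any finite simple graph with chromatic number at most four (in particular any
planar connectivity graph) admits a Pauli set with nine settings: `φ₂(G) ≤ 9`. -/
theorem phi2_le_nine_of_chromaticNumber_le_four {V : Type*} [Fintype V]
    (G : SimpleGraph V) (h : G.chromaticNumber ≤ 4) :
    phi2G G ≤ 9 := by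
  classical
  obtain ⟨C⟩ : G.Colorable 4 :=
    SimpleGraph.chromaticNumber_le_iff_colorable.mp (by exact_mod_cast h)
  let S : Finset (V → Fin 3) :=
    Finset.univ.image fun p : Fin 3 × Fin 3 => fun v => planeForm (C v) p
  have hS : IsPauliSet G S := by
    intro i j hij a b
    obtain ⟨p, ha, hb⟩ := planeForm_orthogonal (C i) (C j) (C.valid hij) a b
    exact ⟨_, Finset.mem_image_of_mem _ (Finset.mem_univ p), ha, hb⟩
  -- The image may have fewer than nine elements (e.g. when `V` is empty).
  have hcard : S.card ≤ 9 := Finset.card_image_le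
  have hle : phi2G G ≤ S.card := Nat.sInf_le ⟨S, rfl, hS⟩
  exact hle.trans hcard
end

section
/- The minimal number of Pauli settings for three-body overlapping tomography of four qubits is exactly 27: φ₃(4) = 27. That is, there exist 27 functions f : Fin 4 → Fin 3 such that for every 3-element subset T of Fin 4 and every assignment g : Fin 4 → Fin 3 some f in the set agrees with g on T, and no smaller set of functions has this property. -/
/-!
For the lower bound, restricting the functions of a covering set to a fixed 3-element set `T`
must reach all `3 ^ 3 = 27` patterns on `T`. For the upper bound, take the parity-check code
`{f | ∑ i, f i = 0}` over `ℤ/3`: three coordinates of a codeword may be chosen freely and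
determine the fourth one, so the code has `27` elements and shows each pattern on every
3-element set.
-/

/-- `phiCA k n` is the minimal cardinality of a Pauli covering set of strength `k` for
`n` qubits: a finite set `S` of functions `Fin n → Fin 3` such that for every
`k`-element subset `T ⊆ Fin n` and every `g : Fin n → Fin 3` some `f ∈ S` agrees with
`g` on `T` (the covering array number `CAN(k, n, 3)`). -/
noncomputable def phiCA (k n : ℕ) : ℕ :=
  sInf {N : ℕ | ∃ S : Finset (Fin n → Fin 3), S.card = N ∧
    ∀ T : Finset (Fin n), T.card = k →
      ∀ g : Fin n → Fin 3, ∃ f ∈ S, ∀ i ∈ T, f i = g i}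

/-- The word of length four extending `h` by the last letter that makes the sum of all
letters `0` in `ℤ/3`. -/
def parityExtend (h : Fin 3 → Fin 3) : Fin 4 → Fin 3 :=
  Fin.snoc h (-∑ i, h i)

theorem parityExtend_injective : Function.Injective parityExtend := by
  intro h h' e
  have := congrArg (fun f : Fin 4 → Fin 3 => (Fin.init f : Fin 3 → Fin 3)) e
  simpa [parityExtend] using this

theorem parityExtend_init {f : Fin 4 → Fin 3} (hf : ∑ i, f i = 0) :
    parityExtend (Fin.init f) = f := by
  rw [Fin.sum_univ_castSucc] at hf
  have hl : -∑ i, (Fin.init f : Fin 3 → Fin 3) i = f (Fin.last 3) :=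
    neg_eq_of_add_eq_zero_right hf
  rw [parityExtend, hl]
  exact Fin.snoc_init_self f

/-- A word can be altered in any single position `j` so that its letters sum to `0`. -/
theorem exists_sum_eq_zero_of_ne (j : Fin 4) (g : Fin 4 → Fin 3) :
    ∃ f : Fin 4 → Fin 3, ∑ i, f i = 0 ∧ ∀ i, i ≠ j → f i = g i := by
  refine ⟨Function.update g j (-∑ i ∈ Finset.univ \ {j}, g i), ?_,
    fun i hi => Function.update_of_ne hi _ _⟩
  rw [Finset.sum_update_of_mem (Finset.mem_univ j), neg_add_cancel]

/-- A covering set of strength three has at least one element for each of the 27 patterns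
on the first three positions. -/
theorem le_card_of_covering {S : Finset (Fin 4 → Fin 3)}
    (hS : ∀ T : Finset (Fin 4), T.card = 3 →
      ∀ g : Fin 4 → Fin 3, ∃ f ∈ S, ∀ i ∈ T, f i = g i) : 27 ≤ S.card := by
  have hsurj : S.image (fun f => (Fin.init f : Fin 3 → Fin 3)) = Finset.univ := by
    refine Finset.eq_univ_of_forall fun h => ?_
    obtain ⟨f, hf, hfg⟩ := hS (Finset.univ.erase (Fin.last 3)) (by simp) (parityExtend h)
    refine Finset.mem_image.2 ⟨f, hf, funext fun i => ?_⟩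
    have := hfg i.castSucc
      (Finset.mem_erase.2 ⟨Fin.castSucc_ne_last i, Finset.mem_univ _⟩)
    simpa [Fin.init, parityExtend] using this
  calc 27 = (S.image (fun f => (Fin.init f : Fin 3 → Fin 3))).card := by simp [hsurj]
    _ ≤ S.card := Finset.card_image_le

/-- The minimal number of Pauli settings for three-body overlapping tomography of
four qubits is exactly 27: `φ₃(4) = 27`. -/
theorem phi3_four : phiCA 3 4 = 27 := by
  refine IsLeast.csInf_eq ⟨⟨Finset.univ.image parityExtend, ?_, ?_⟩, ?_⟩
  · simp [Finset.card_image_of_injective _ parityExtend_injective]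
  · intro T hT g
    obtain ⟨j, hj⟩ : ∃ j, j ∉ T := by
      by_contra! h
      simp [Finset.eq_univ_of_forall h] at hT
    obtain ⟨f, hf, hfg⟩ := exists_sum_eq_zero_of_ne j g
    exact ⟨f, Finset.mem_image.2 ⟨Fin.init f, Finset.mem_univ _, parityExtend_init hf⟩,
      fun i hi => hfg i (ne_of_mem_of_not_mem hi hj)⟩
  · rintro N ⟨S, rfl, hS⟩
    exact le_card_of_covering hS
end

section
/- The minimal number of Pauli settings for three-body overlapping tomography of five qubits is exactly 33: φ₃(5) = 33. That is, there exist 33 functions f : Fin 5 → Fin 3 such that for every 3-element subset T of Fin 5 and every assignment g : Fin 5 → Fin 3 some f in the set agrees with g on T, and no 32 such functions suffice. -/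
open Finset

/-! ### Pair-covering sets and their covering radius -/

/-- Every pair of coordinates takes all nine pairs of values on `C`. -/
def PairCovering (C : Finset (Fin 4 → Fin 3)) : Prop :=
  ∀ i j, i ≠ j → ∀ a b, ∃ c ∈ C, c i = a ∧ c j = b

/-- Every word of `C` differs from `p` in at least two coordinates. -/
def FarFrom (C : Finset (Fin 4 → Fin 3)) (p : Fin 4 → Fin 3) : Prop :=
  ∀ c ∈ C, ∀ i, ∃ j, j ≠ i ∧ c j ≠ p j

lemma three_le_card_of_agree {C : Finset (Fin 4 → Fin 3)} {p : Fin 4 → Fin 3}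
    (hC : PairCovering C) {i j : Fin 4} (hij : i ≠ j) {c d : Fin 4 → Fin 3}
    (hc : c ∈ C) (hd : d ∈ C) (hci : c i = p i) (hdi : d i = p i) (hcj : c j ≠ p j)
    (hcd : c ≠ d) (h : c j = d j) :
    3 ≤ #{c ∈ C | c i = p i ∧ c j ≠ p j} := by
  obtain ⟨b, hb1, hb2⟩ : ∃ b : Fin 3, b ≠ p j ∧ b ≠ c j := by
    generalize p j = x, c j = y
    revert x y
    decide
  obtain ⟨e, he, hei, hej⟩ := hC i j hij (p i) b
  refine Finset.two_lt_card.2 ⟨c, ?_, d, ?_, e, ?_, hcd, ?_, ?_⟩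
  · simp [hc, hci, hcj]
  · simp [hd, hdi, ← h, hcj]
  · simp [he, hei, hej, hb1]
  · rintro rfl
    exact hb2 hej.symm
  · rintro rfl
    exact hb2 (h ▸ hej.symm)

/-- Words of `C` agreeing with `p` at exactly `{i, k}`, `{i, l}`, `{k, l}` all miss the value `p j`
at the fourth coordinate `j`, so two of them agree there, and one more word is needed to realise
the third value at `j`. -/
lemma exists_three_le_card {C : Finset (Fin 4 → Fin 3)} {p : Fin 4 → Fin 3}
    (hC : PairCovering C) (hp : FarFrom C p) (i k l j : Fin 4)
    (hik : i ≠ k) (hil : i ≠ l) (hkl : k ≠ l) (hij : i ≠ j) (hkj : k ≠ j) (hlj : l ≠ j) :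
    3 ≤ #{c ∈ C | c i = p i ∧ c j ≠ p j} ∨ 3 ≤ #{c ∈ C | c k = p k ∧ c j ≠ p j} ∨
      3 ≤ #{c ∈ C | c l = p l ∧ c j ≠ p j} := by
  -- A word agreeing with `p` at two coordinates disagrees at the other two.
  have key : ∀ i k l j : Fin 4, i ≠ k → i ≠ l → k ≠ l → i ≠ j → k ≠ j → l ≠ j →
      ∀ c ∈ C, c i = p i → c k = p k → c j ≠ p j := by
    intro i k l j hik hil hkl hij hkj hlj c hc hi hk hj
    obtain ⟨m, hm, hm'⟩ := hp c hc l
    have : m = i ∨ m = k ∨ m = j := by omega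
    rcases this with rfl | rfl | rfl <;> exact hm' ‹_›
  obtain ⟨c₁, h₁, h₁i, h₁k⟩ := hC i k hik (p i) (p k)
  obtain ⟨c₂, h₂, h₂i, h₂l⟩ := hC i l hil (p i) (p l)
  obtain ⟨c₃, h₃, h₃k, h₃l⟩ := hC k l hkl (p k) (p l)
  have h₁j := key i k l j hik hil hkl hij hkj hlj c₁ h₁ h₁i h₁k
  have h₂j := key i l k j hil hik hkl.symm hij hlj hkj c₂ h₂ h₂i h₂l
  have h₃j := key k l i j hkl hik.symm hil.symm hkj hlj hij c₃ h₃ h₃k h₃l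
  have h₁l := key i k j l hik hij hkj hil hkl hlj.symm c₁ h₁ h₁i h₁k
  have h₂k := key i l j k hil hij hlj hik hkl.symm hkj.symm c₂ h₂ h₂i h₂l
  have pigeon : ∀ x y z w : Fin 3, x ≠ w → y ≠ w → z ≠ w → x = y ∨ x = z ∨ y = z := by decide
  rcases pigeon _ _ _ _ h₁j h₂j h₃j with h | h | h
  · exact .inl (three_le_card_of_agree hC hij h₁ h₂ h₁i h₂i h₁j (by rintro rfl; exact h₁l h₂l) h)
  · exact .inr (.inl
      (three_le_card_of_agree hC hkj h₁ h₃ h₁k h₃k h₁j (by rintro rfl; exact h₁l h₃l) h))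
  · exact .inr (.inr
      (three_le_card_of_agree hC hlj h₂ h₃ h₂l h₃l h₂j (by rintro rfl; exact h₂k h₃k) h))

lemma four_le_card {C : Finset (Fin 4 → Fin 3)} (hC : PairCovering C) (p : Fin 4 → Fin 3)
    {i j : Fin 4} (hij : i ≠ j) : 4 ≤ #{c ∈ C | c i ≠ p i ∧ c j ≠ p j} := by
  calc 4 = #(({p i}ᶜ : Finset (Fin 3)) ×ˢ ({p j}ᶜ : Finset (Fin 3))) := by
        simp [Finset.card_product, Finset.card_compl]
    _ ≤ #(({c ∈ C | c i ≠ p i ∧ c j ≠ p j}).image fun c ↦ (c i, c j)) := by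
        refine Finset.card_le_card ?_
        rintro ⟨a, b⟩ hab
        simp only [mem_product, mem_compl, mem_singleton] at hab
        obtain ⟨c, hc, rfl, rfl⟩ := hC i j hij a b
        simp only [mem_image, mem_filter]
        exact ⟨c, ⟨hc, hab⟩, rfl⟩
    _ ≤ _ := Finset.card_image_le

/-- The set of coordinates where `c` agrees with `p`, as a tuple of Booleans. -/
def agreement (p c : Fin 4 → Fin 3) : Bool × Bool × Bool × Bool :=
  (decide (c 0 = p 0), decide (c 1 = p 1), decide (c 2 = p 2), decide (c 3 = p 3))

/-- The `i`-th entry of a tuple of Booleans. -/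
def entry (b : Bool × Bool × Bool × Bool) : Fin 4 → Bool :=
  ![b.1, b.2.1, b.2.2.1, b.2.2.2]

lemma entry_agreement (p c : Fin 4 → Fin 3) (i : Fin 4) :
    entry (agreement p c) i = decide (c i = p i) := by
  fin_cases i <;> rfl

lemma card_filter_agreement (C : Finset (Fin 4 → Fin 3)) (p : Fin 4 → Fin 3)
    (Q : Bool × Bool × Bool × Bool → Bool) :
    #{c ∈ C | Q (agreement p c) = true} =
      ∑ b, if Q b = true then #{c ∈ C | agreement p c = b} else 0 := by
  rw [Finset.card_eq_sum_card_fiberwise (f := agreement p) (t := univ) (by simp)]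
  refine Finset.sum_congr rfl fun b _ ↦ ?_
  rw [Finset.filter_filter]
  split_ifs with h
  · congr 1
    ext c
    simp only [mem_filter]
    grind
  · rw [Finset.card_eq_zero, Finset.filter_eq_empty_iff]
    grind

lemma covering_radius {C : Finset (Fin 4 → Fin 3)} (hC : PairCovering C) (hcard : #C ≤ 10)
    (p : Fin 4 → Fin 3) : ¬ FarFrom C p := by
  intro hp
  obtain ⟨n, hn⟩ : ∃ n : Bool × Bool × Bool × Bool → ℕ,
      ∀ b, #{c ∈ C | agreement p c = b} = n b := ⟨_, fun _ ↦ rfl⟩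
  have e := card_filter_agreement C p
  have total : #C = ∑ b, n b := by
    simp only [← hn]
    exact Finset.card_eq_sum_card_fiberwise (by simp)
  -- No word agrees with `p` in three or more coordinates.
  have zero : ∀ b i, (∀ j, j ≠ i → entry b j = true) → n b = 0 := by
    intro b i hb
    rw [← hn, Finset.card_eq_zero, Finset.filter_eq_empty_iff]
    rintro c hc rfl
    obtain ⟨j, hj, hj'⟩ := hp c hc i
    exact hj' (by simpa [entry_agreement] using hb j hj)
  have y : ∀ i j, i ≠ j → 1 ≤ ∑ b, if (entry b i && entry b j) = true then n b else 0 := by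
    intro i j hij
    obtain ⟨c, hc, h⟩ := hC i j hij (p i) (p j)
    simp only [← hn]
    rw [← e fun b ↦ entry b i && entry b j]
    exact Finset.card_pos.2 ⟨c, by simp [entry_agreement, hc, h]⟩
  have z : ∀ i j, i ≠ j → 4 ≤ ∑ b, if (!entry b i && !entry b j) = true then n b else 0 := by
    intro i j hij
    simp only [← hn]
    rw [← e fun b ↦ !entry b i && !entry b j]
    simpa [entry_agreement] using four_le_card hC p hij
  have t : ∀ i k l j, [i, k, l, j].Nodup →
      (3 ≤ ∑ b, if (entry b i && !entry b j) = true then n b else 0) ∨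
      (3 ≤ ∑ b, if (entry b k && !entry b j) = true then n b else 0) ∨
      (3 ≤ ∑ b, if (entry b l && !entry b j) = true then n b else 0) := by
    intro i k l j h
    simp only [← hn]
    rw [← e fun b ↦ entry b i && !entry b j, ← e fun b ↦ entry b k && !entry b j,
      ← e fun b ↦ entry b l && !entry b j]
    have := exists_three_le_card hC hp i k l j
    simp only [List.nodup_cons, List.mem_cons, List.not_mem_nil, not_or] at h
    simpa [entry_agreement, h] using this
  have zero₀ := fun a ↦ zero (a, true, true, true) 0 (by cases a <;> decide)
  have zero₁ := fun a ↦ zero (true, a, true, true) 1 (by cases a <;> decide)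
  have zero₂ := fun a ↦ zero (true, true, a, true) 2 (by cases a <;> decide)
  have zero₃ := fun a ↦ zero (true, true, true, a) 3 (by cases a <;> decide)
  have y₀₁ := y 0 1 (by decide)
  have y₀₂ := y 0 2 (by decide)
  have y₀₃ := y 0 3 (by decide)
  have y₁₂ := y 1 2 (by decide)
  have y₁₃ := y 1 3 (by decide)
  have y₂₃ := y 2 3 (by decide)
  have z₀₁ := z 0 1 (by decide)
  have z₀₂ := z 0 2 (by decide)
  have z₀₃ := z 0 3 (by decide)
  have z₁₂ := z 1 2 (by decide)
  have z₁₃ := z 1 3 (by decide)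
  have z₂₃ := z 2 3 (by decide)
  have t₀ := t 1 2 3 0 (by decide)
  have t₁ := t 0 2 3 1 (by decide)
  have t₂ := t 0 1 3 2 (by decide)
  have t₃ := t 0 1 2 3 (by decide)
  clear y z t zero e hn hp hC
  -- A linear system in the eleven numbers of words agreeing with `p` at a given set of at most two
  -- coordinates.
  simp [Fintype.sum_prod_type, entry, zero₀, zero₁, zero₂, zero₃]
    at total y₀₁ y₀₂ y₀₃ y₁₂ y₁₃ y₂₃ z₀₁ z₀₂ z₀₃ z₁₂ z₁₃ z₂₃ t₀ t₁ t₂ t₃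
  omega

/-! ### Counting lines -/

/-- The four lines of `(Fin 3)⁴` in a coordinate direction through `w`. A line is encoded by its
direction `i` and the values of the other three coordinates. -/
def linesThrough (w : Fin 4 → Fin 3) : Finset (Fin 4 × (Fin 3 → Fin 3)) :=
  univ.image fun i ↦ (i, i.removeNth w)

lemma card_linesThrough_le (w : Fin 4 → Fin 3) : #(linesThrough w) ≤ 4 :=
  Finset.card_image_le

/-- By `covering_radius` every word shares a line with a word of `C`, so at most three of the
lines through it avoid `C`. -/
lemma card_linesThrough_sdiff_le {C : Finset (Fin 4 → Fin 3)} (hC : PairCovering C)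
    (hcard : #C ≤ 10) (w : Fin 4 → Fin 3) :
    #(linesThrough w \ C.biUnion linesThrough) ≤ 3 := by
  have h := covering_radius hC hcard w
  simp only [FarFrom] at h
  push Not at h
  obtain ⟨c, hc, i, hi⟩ := h
  have hmem : (i, i.removeNth w) ∈ linesThrough w := mem_image_of_mem _ (mem_univ i)
  have hmem' : (i, i.removeNth w) ∈ C.biUnion linesThrough := by
    refine mem_biUnion.2 ⟨c, hc, mem_image.2 ⟨i, mem_univ i, ?_⟩⟩
    ext1
    · rfl
    · funext k
      exact hi _ (Fin.succAbove_ne i k)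
  have : linesThrough w \ C.biUnion linesThrough ⊂ linesThrough w :=
    Finset.ssubset_iff_subset_ne.2 ⟨sdiff_subset, fun h ↦ (mem_sdiff.1 (h ▸ hmem)).2 hmem'⟩
  have := Finset.card_lt_card this
  have := card_linesThrough_le w
  omega

lemma le_of_lines_covered {C D : Finset (Fin 4 → Fin 3)} (hC : PairCovering C) (hcard : #C ≤ 10)
    (hcov : ∀ x, ∃ w ∈ C ∪ D, x ∈ linesThrough w) : 108 ≤ #C * 4 + #D * 3 := by
  have huniv : (univ : Finset (Fin 4 × (Fin 3 → Fin 3))) ⊆ C.biUnion linesThrough ∪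
      D.biUnion fun w ↦ linesThrough w \ C.biUnion linesThrough := by
    intro x _
    obtain ⟨w, hw, hx⟩ := hcov x
    by_cases hxC : x ∈ C.biUnion linesThrough
    · exact mem_union_left _ hxC
    · rcases mem_union.1 hw with hw | hw
      · exact absurd (mem_biUnion.2 ⟨w, hw, hx⟩) hxC
      · exact mem_union_right _ (mem_biUnion.2 ⟨w, hw, mem_sdiff.2 ⟨hx, hxC⟩⟩)
  have h108 : #(univ : Finset (Fin 4 × (Fin 3 → Fin 3))) = 108 := by simp
  calc 108 ≤ _ := h108 ▸ Finset.card_le_card huniv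
    _ ≤ _ := Finset.card_union_le _ _
    _ ≤ _ := Nat.add_le_add
      (Finset.card_biUnion_le_card_mul _ _ _ fun w _ ↦ card_linesThrough_le w)
      (Finset.card_biUnion_le_card_mul _ _ _ fun w _ ↦ card_linesThrough_sdiff_le hC hcard w)

lemma lower_bound (S : Finset (Fin 5 → Fin 3))
    (hS : ∀ T : Finset (Fin 5), #T = 3 → ∀ g : Fin 5 → Fin 3, ∃ f ∈ S, ∀ i ∈ T, f i = g i) :
    33 ≤ #S := by
  by_contra! hlt
  obtain ⟨v, hv⟩ : ∃ v : Fin 3, #{f ∈ S | f 0 = v} ≤ 10 := by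
    by_contra! h
    have hsum : #S = ∑ v, #{f ∈ S | f 0 = v} :=
      Finset.card_eq_sum_card_fiberwise (by simp)
    rw [Fin.sum_univ_three] at hsum
    have := h 0
    have := h 1
    have := h 2
    omega
  set C := ({f ∈ S | f 0 = v}).image Fin.tail with hCdef
  set D := ({f ∈ S | ¬ f 0 = v}).image Fin.tail with hDdef
  have hCcard : #C ≤ #{f ∈ S | f 0 = v} := Finset.card_image_le
  have hDcard : #D ≤ #{f ∈ S | ¬ f 0 = v} := Finset.card_image_le
  have hadd := Finset.card_filter_add_card_filter_not (s := S) (fun f ↦ f 0 = v)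
  have hC : PairCovering C := by
    intro i j hij a b
    have hij' : j.succ ≠ i.succ := fun h ↦ hij (Fin.succ_injective _ h).symm
    obtain ⟨f, hf, h⟩ := hS {0, i.succ, j.succ}
      (Finset.card_eq_three.2 ⟨_, _, _, (Fin.succ_ne_zero i).symm, (Fin.succ_ne_zero j).symm,
        hij'.symm, rfl⟩)
      (fun x ↦ if x = 0 then v else if x = i.succ then a else b)
    refine ⟨Fin.tail f, mem_image_of_mem _ (mem_filter.2 ⟨hf, ?_⟩), ?_, ?_⟩
    · simpa using h 0 (by simp)
    · simpa [Fin.tail] using h i.succ (by simp)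
    · simpa [Fin.tail, hij'] using h j.succ (by simp)
  have hcov : ∀ x, ∃ w ∈ C ∪ D, x ∈ linesThrough w := by
    rintro ⟨i, w⟩
    obtain ⟨f, hf, h⟩ := hS ((univ.erase 0).erase i.succ)
      (by rw [Finset.card_erase_of_mem (by simp), Finset.card_erase_of_mem (by simp)]; simp)
      (Fin.cons 0 (i.insertNth 0 w))
    refine ⟨Fin.tail f, ?_, mem_image.2 ⟨i, mem_univ i, ?_⟩⟩
    · by_cases h0 : f 0 = v
      · exact mem_union_left _ (mem_image_of_mem _ (mem_filter.2 ⟨hf, h0⟩))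
      · exact mem_union_right _ (mem_image_of_mem _ (mem_filter.2 ⟨hf, h0⟩))
    · ext1
      · rfl
      · funext k
        have := h (i.succAbove k).succ (by simp [Fin.succAbove_ne])
        simpa [Fin.removeNth, Fin.tail] using this
  have := le_of_lines_covered hC (hCcard.trans hv) hcov
  omega

/-! ### A covering set with 33 elements -/

/-- Representatives, normalised to have first coordinate 0, of a covering set that is invariant
under adding a constant. -/
def representative : Fin 11 → Fin 5 → Fin 3 :=
  ![![0, 0, 0, 0, 2], ![0, 0, 1, 1, 0], ![0, 0, 2, 1, 1], ![0, 0, 2, 2, 2], ![0, 1, 0, 1, 1],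
    ![0, 1, 1, 0, 2], ![0, 1, 1, 2, 1], ![0, 1, 2, 0, 0], ![0, 2, 0, 2, 0], ![0, 2, 1, 1, 2],
    ![0, 2, 2, 0, 1]]

/-- The word obtained by adding the constant `x.2` to the representative with index `x.1`. -/
def setting (x : Fin 11 × Fin 3) : Fin 5 → Fin 3 := fun i ↦ representative x.1 i + x.2

lemma setting_injective : Function.Injective setting := by
  decide +kernel

lemma setting_covers : ∀ i j k : Fin 5, i ≠ j → i ≠ k → j ≠ k → ∀ a b c : Fin 3,
    ∃ x, setting x i = a ∧ setting x j = b ∧ setting x k = c := by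
  decide +kernel

/-- The minimal number of Pauli settings for three-body overlapping tomography of
five qubits is exactly 33: `φ₃(5) = 33`. -/
theorem phi3_five : phiCA 3 5 = 33 := by
  have hmem : ∃ S : Finset (Fin 5 → Fin 3), S.card = 33 ∧
      ∀ T : Finset (Fin 5), T.card = 3 →
        ∀ g : Fin 5 → Fin 3, ∃ f ∈ S, ∀ i ∈ T, f i = g i := by
    refine ⟨univ.image setting, ?_, ?_⟩
    · simp [Finset.card_image_of_injective _ setting_injective]
    · intro T hT g
      obtain ⟨i, j, k, hij, hik, hjk, rfl⟩ := Finset.card_eq_three.1 hT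
      obtain ⟨x, hi, hj, hk⟩ := setting_covers i j k hij hik hjk (g i) (g j) (g k)
      exact ⟨setting x, mem_image_of_mem _ (mem_univ x), by simp [hi, hj, hk]⟩
  refine le_antisymm (Nat.sInf_le hmem) (le_csInf ⟨33, hmem⟩ ?_)
  rintro N ⟨S, rfl, hS⟩
  exact lower_bound S hS
end

section
/- The minimal number of Pauli settings for three-body overlapping tomography of six qubits is exactly 33: φ₃(6) = 33. That is, there exist 33 functions f : Fin 6 → Fin 3 such that for every 3-element subset T of Fin 6 and every assignment g : Fin 6 → Fin 3 some f in the set agrees with g on T, and no 32 such functions suffice. -/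
open Finset

/-- Double counting: the number of agreeing pairs of rows, in terms of the fibre sizes. -/
lemma sum_agree {α β : Type*} [Fintype α] [Fintype β] [DecidableEq β] (u : α → β) :
    ∑ p, ∑ q, (if u p = u q then (1 : ℤ) else 0)
      = ∑ b, (∑ p, if u p = b then (1 : ℤ) else 0) ^ 2 := by
  simp_rw [sq, Finset.sum_mul_sum]
  conv_rhs => rw [Finset.sum_comm]
  refine Finset.sum_congr rfl fun p _ => ?_
  rw [Finset.sum_comm]
  refine Finset.sum_congr rfl fun q _ => ?_
  simp [eq_comm]

/-- The fibres of a map partition its domain. -/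
lemma sum_fibre {α β : Type*} [Fintype α] [Fintype β] [DecidableEq β] (u : α → β) :
    ∑ b, (∑ p, if u p = b then (1 : ℤ) else 0) = Fintype.card α := by
  rw [Finset.sum_comm]
  simp

/-- Ten rows meeting each of nine cells do so with square sum of multiplicities at most `12`. -/
lemma sum_agree_pair_le (u : Fin 10 → Fin 3 × Fin 3) (hu : Function.Surjective u) :
    ∑ p, ∑ q, (if u p = u q then (1 : ℤ) else 0) ≤ 12 := by
  rw [sum_agree]
  have hs := sum_fibre u
  set N : Fin 3 × Fin 3 → ℤ := fun b => ∑ p, if u p = b then (1 : ℤ) else 0 with hN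
  have h1 : ∀ b, 1 ≤ N b := by
    intro b
    obtain ⟨p, hp⟩ := hu b
    calc (1 : ℤ) = if u p = b then 1 else 0 := by simp [hp]
      _ ≤ N b := Finset.single_le_sum (f := fun p => if u p = b then (1 : ℤ) else 0)
          (fun q _ => by split_ifs <;> simp) (Finset.mem_univ p)
  change ∑ b, N b = _ at hs
  change ∑ b, N b ^ 2 ≤ 12
  have hs' : ∑ b, (N b - 1) = 1 := by
    rw [Finset.sum_sub_distrib, hs]; simp
  have h2 : ∀ b, N b ≤ 2 := by
    intro b
    have := Finset.single_le_sum (f := fun b => N b - 1)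
      (fun c _ => sub_nonneg.2 (h1 c)) (Finset.mem_univ b)
    rw [hs'] at this
    linarith
  -- On `{1, 2}` the square is the affine function `3 x - 2`.
  calc ∑ b, N b ^ 2 ≤ ∑ b, (3 * N b - 2) :=
        Finset.sum_le_sum fun b _ => by nlinarith [h1 b, h2 b]
    _ = 12 := by
        rw [Finset.sum_sub_distrib, ← Finset.mul_sum, hs]; simp

/-- Cauchy–Schwarz bound for one column with three symbols. -/
lemma le_sum_agree_single (u : Fin 10 → Fin 3) :
    100 ≤ 3 * ∑ p, ∑ q, (if u p = u q then (1 : ℤ) else 0) := by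
  rw [sum_agree]
  have h := sq_sum_le_card_mul_sum_sq (s := univ)
    (f := fun b => ∑ p, if u p = b then (1 : ℤ) else 0)
  rw [sum_fibre] at h
  simpa using h

/-- There is no covering array of strength `2` with ten rows, five columns and three symbols. -/
lemma no_ten_rows (r : Fin 10 → Fin 5 → Fin 3)
    (h : ∀ i j, i ≠ j → ∀ a b, ∃ p, r p i = a ∧ r p j = b) : False := by
  let e : Fin 5 → Fin 10 → Fin 10 → ℤ := fun i p q => if r p i = r q i then 1 else 0
  let A : Fin 10 → Fin 10 → ℤ := fun p q => ∑ i, e i p q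
  let D : Fin 5 → ℤ := fun i => ∑ p, ∑ q, e i p q
  have hD : ∀ i, 100 ≤ 3 * D i := fun i => le_sum_agree_single fun p => r p i
  have hA1 : ∑ p, ∑ q, A p q = ∑ i, D i := by
    simp only [A, D]
    rw [Finset.sum_comm]
    simp_rw [Finset.sum_comm (s := (univ : Finset (Fin 10))) (t := (univ : Finset (Fin 5)))]
    exact Finset.sum_congr rfl fun i _ => Finset.sum_comm
  have hA2 : ∑ p, ∑ q, A p q ^ 2 = ∑ i, ∑ j, ∑ p, ∑ q, e i p q * e j p q := by
    simp only [A, sq, Finset.sum_mul_sum]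
    simp_rw [Finset.sum_comm (s := (univ : Finset (Fin 10))) (t := (univ : Finset (Fin 5)))]
  have hpair : ∀ i j, ∑ p, ∑ q, e i p q * e j p q ≤ if i = j then D i else 12 := by
    intro i j
    split_ifs with hij
    · subst hij
      refine le_of_eq (Finset.sum_congr rfl fun p _ => Finset.sum_congr rfl fun q _ => ?_)
      simp only [e]; split_ifs <;> simp
    · refine le_trans (le_of_eq ?_) (sum_agree_pair_le (fun p => (r p i, r p j)) ?_)
      · refine Finset.sum_congr rfl fun p _ => Finset.sum_congr rfl fun q _ => ?_
        simp only [e, Prod.mk.injEq, ite_and]; split_ifs <;> simp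
      · rintro ⟨a, b⟩
        obtain ⟨p, h1, h2⟩ := h i j hij a b
        exact ⟨p, by simp [h1, h2]⟩
  have hA2' : ∑ p, ∑ q, A p q ^ 2 ≤ ∑ i, D i + 240 := by
    rw [hA2]
    refine (Finset.sum_le_sum fun i _ => Finset.sum_le_sum fun j _ => hpair i j).trans
      (le_of_eq ?_)
    simp [Fin.sum_univ_five]
    ring
  have hdiag : ∀ p, A p p = 5 := fun p => by simp [A, e]
  -- The diagonal contributes `(5 - 1) * (5 - 2) = 12`.
  have hnn : ∀ p q, (if p = q then (12 : ℤ) else 0) ≤ A p q ^ 2 - 3 * A p q + 2 := by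
    intro p q
    split_ifs with hpq
    · subst hpq; rw [hdiag]; norm_num
    · rcases le_or_gt (A p q) 1 with h | h
      · nlinarith
      · have : 2 ≤ A p q := h
        nlinarith
  have hsum := Finset.sum_le_sum fun p (_ : p ∈ (univ : Finset (Fin 10))) =>
    Finset.sum_le_sum fun q (_ : q ∈ (univ : Finset (Fin 10))) => hnn p q
  have hDs : 500 ≤ 3 * ∑ i, D i := by
    rw [Finset.mul_sum]
    exact le_trans (by simp) (Finset.sum_le_sum fun i (_ : i ∈ univ) => hD i)
  simp only [Finset.sum_add_distrib, Finset.sum_sub_distrib, ← Finset.mul_sum, hA1,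
    Finset.sum_ite_eq, Finset.mem_univ, if_true, Finset.sum_const, Finset.card_univ,
    Fintype.card_fin, nsmul_eq_mul] at hsum
  push_cast at hsum
  linarith

/-- In a strength-`3` covering set on six coordinates, each value of coordinate `0` is taken by
at least eleven functions. -/
lemma eleven_le_fibre (S : Finset (Fin 6 → Fin 3))
    (hS : ∀ T : Finset (Fin 6), T.card = 3 →
      ∀ g : Fin 6 → Fin 3, ∃ f ∈ S, ∀ i ∈ T, f i = g i) (a : Fin 3) :
    11 ≤ (S.filter fun f => f 0 = a).card := by
  by_contra! hlt
  set F := S.filter fun f => f 0 = a with hF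
  have hcov : ∀ i j : Fin 5, i ≠ j → ∀ b c, ∃ f ∈ F, f i.succ = b ∧ f j.succ = c := by
    intro i j hij b c
    have hij' : j.succ ≠ i.succ := fun h => hij (Fin.succ_injective _ h).symm
    obtain ⟨f, hf, hfg⟩ := hS {0, i.succ, j.succ}
      (Finset.card_eq_three.2 ⟨_, _, _, (Fin.succ_ne_zero i).symm, (Fin.succ_ne_zero j).symm,
        hij'.symm, rfl⟩)
      (fun k => if k = 0 then a else if k = i.succ then b else c)
    refine ⟨f, Finset.mem_filter.2 ⟨hf, ?_⟩, ?_, ?_⟩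
    · simpa using hfg 0 (by simp)
    · simpa using hfg i.succ (by simp)
    · simpa [hij'] using hfg j.succ (by simp)
  obtain ⟨f₀, hf₀, -⟩ := hcov 0 1 (by decide) 0 0
  have : Nonempty F := ⟨⟨f₀, hf₀⟩⟩
  -- Pad to exactly ten rows by repetition.
  obtain ⟨φ⟩ : Nonempty (F ↪ Fin 10) :=
    Function.Embedding.nonempty_of_card_le (by simp; omega)
  have hsurj := Function.invFun_surjective φ.injective
  refine no_ten_rows (fun p i => (Function.invFun φ p : F).1 i.succ) fun i j hij b c => ?_
  obtain ⟨f, hf, h1, h2⟩ := hcov i j hij b c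
  obtain ⟨p, hp⟩ := hsurj ⟨f, hf⟩
  exact ⟨p, by simp [hp, h1], by simp [hp, h2]⟩

/-- The perfect matchings of a one-factorization of `K₆`, each given by the labels of its three
edges at the six vertices. -/
def matchings : Fin 5 → Fin 6 → Fin 3 :=
  ![![0, 0, 1, 1, 2, 2], ![0, 1, 0, 2, 1, 2], ![0, 1, 1, 2, 2, 0], ![0, 1, 2, 0, 2, 1],
    ![0, 1, 2, 1, 0, 2]]

/-- All relabellings of the five matchings, together with the constant functions. -/
def rows33 : Finset (Fin 6 → Fin 3) :=
  (univ.image fun x : Fin 5 × Equiv.Perm (Fin 3) => fun i => x.2 (matchings x.1 i)) ∪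
    univ.image fun a : Fin 3 => fun _ => a

lemma card_rows33_le : rows33.card ≤ 33 := by
  refine (Finset.card_union_le _ _).trans ?_
  refine (Nat.add_le_add Finset.card_image_le Finset.card_image_le).trans ?_
  simp [Fintype.card_perm, Nat.factorial]

/-- Three values not all equal are realized, at any three coordinates, by a relabelled matching. -/
lemma matchings_cover : ∀ i j k : Fin 6, i ≠ j → i ≠ k → j ≠ k → ∀ a b c : Fin 3,
    ¬ (a = b ∧ a = c) → ∃ (m : Fin 5) (σ : Equiv.Perm (Fin 3)),
      σ (matchings m i) = a ∧ σ (matchings m j) = b ∧ σ (matchings m k) = c := by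
  decide +kernel

lemma rows33_cover (T : Finset (Fin 6)) (hT : T.card = 3) (g : Fin 6 → Fin 3) :
    ∃ f ∈ rows33, ∀ i ∈ T, f i = g i := by
  obtain ⟨i, j, k, hij, hik, hjk, rfl⟩ := Finset.card_eq_three.1 hT
  by_cases hg : g i = g j ∧ g i = g k
  · refine ⟨fun _ => g i, Finset.mem_union_right _ (Finset.mem_image_of_mem _ (mem_univ _)), ?_⟩
    simp [← hg.1, ← hg.2]
  · obtain ⟨m, σ, h1, h2, h3⟩ := matchings_cover i j k hij hik hjk _ _ _ hg
    refine ⟨fun l => σ (matchings m l), Finset.mem_union_left _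
      (Finset.mem_image.2 ⟨(m, σ), mem_univ _, rfl⟩), ?_⟩
    simp [h1, h2, h3]

lemma le_card_of_cover (S : Finset (Fin 6 → Fin 3))
    (hS : ∀ T : Finset (Fin 6), T.card = 3 →
      ∀ g : Fin 6 → Fin 3, ∃ f ∈ S, ∀ i ∈ T, f i = g i) : 33 ≤ S.card := by
  rw [Finset.card_eq_sum_card_fiberwise (f := fun f => f 0) (t := univ) (by simp)]
  exact le_trans (by simp) (Finset.sum_le_sum fun a (_ : a ∈ univ) => eleven_le_fibre S hS a)

/-- The minimal number of Pauli settings for three-body overlapping tomography of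
six qubits is exactly 33: `φ₃(6) = 33`. -/
theorem phi3_six : phiCA 3 6 = 33 := by
  have hcard : rows33.card = 33 := le_antisymm card_rows33_le (le_card_of_cover _ rows33_cover)
  refine le_antisymm (Nat.sInf_le ⟨rows33, hcard, rows33_cover⟩)
    (le_csInf ⟨33, rows33, hcard, rows33_cover⟩ ?_)
  rintro N ⟨S, rfl, hS⟩
  exact le_card_of_cover S hS
end

section
/- Let n ≥ k ≥ 1 be integers and let F be a family of k-element subsets of Fin n that admits a strong colouring with at most k + 1 colours (a function c : Fin n → Fin (k+1) injective on each member of F). Then k-body overlapping tomography of F can be performed with the minimal number of 3^k Pauli settings: φ_k(F) ≤ 3^k. -/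
/-!
The Pauli settings are the zero-sum words `w : Fin (k + 1) → Fin 3` over `Fin 3 = ℤ/3`, pulled back
along the colouring `c`. Such a word is determined by its last `k` letters, so there are at most
`3 ^ k` of them. A member `T` of `F` meets exactly `k` colours, once each, so some colour `j` is
missing from `T`: any prescription on `T` extends to a word on all colours, and the letter at `j` is
still free to be adjusted so that the sum vanishes (`exists_zeroSum_extension`).
-/

/-- A Pauli set for a family `F` of subsets of `Fin n`: a finite set `S` of functions
`Fin n → Fin 3` such that for every `T ∈ F` and every `g : Fin n → Fin 3` some
`f ∈ S` agrees with `g` on `T`. -/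
def IsPauliFamSet {n : ℕ} (F : Finset (Finset (Fin n))) (S : Finset (Fin n → Fin 3)) :
    Prop :=
  ∀ T ∈ F, ∀ g : Fin n → Fin 3, ∃ f ∈ S, ∀ i ∈ T, f i = g i

/-- `phiFam F` is the minimum cardinality of a Pauli set for the family `F`. -/
noncomputable def phiFam {n : ℕ} (F : Finset (Finset (Fin n))) : ℕ :=
  sInf {N : ℕ | ∃ S : Finset (Fin n → Fin 3), S.card = N ∧ IsPauliFamSet F S}

/-- The zero-sum word whose tail is `v`. -/
def zeroSumWord {k : ℕ} (v : Fin k → Fin 3) : Fin (k + 1) → Fin 3 :=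
  Fin.cons (-∑ i, v i) v

lemma zeroSumWord_tail {k : ℕ} (w : Fin (k + 1) → Fin 3) (hw : ∑ a, w a = 0) :
    zeroSumWord (Fin.tail w) = w := by
  rw [Fin.sum_univ_succ] at hw
  have h0 : -∑ i, Fin.tail w i = w 0 := (eq_neg_of_add_eq_zero_left hw).symm
  rw [zeroSumWord, h0, Fin.cons_self_tail]

/-- A prescription on a set that a colouring maps injectively and not onto all colours is realised
by a zero-sum word on the colours. -/
lemma exists_zeroSum_extension {n k : ℕ} (T : Finset (Fin n)) (c : Fin n → Fin (k + 1))
    (hc : Set.InjOn c (T : Set (Fin n))) (j : Fin (k + 1)) (hj : ∀ i ∈ T, c i ≠ j)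
    (g : Fin n → Fin 3) :
    ∃ w : Fin (k + 1) → Fin 3, ∑ a, w a = 0 ∧ ∀ i ∈ T, w (c i) = g i := by
  classical
  obtain rfl | ⟨i₀, -⟩ := T.eq_empty_or_nonempty
  · exact ⟨0, by simp, by simp⟩
  have : Nonempty (Fin n) := ⟨i₀⟩
  let h : Fin (k + 1) → Fin 3 := fun a => g (Function.invFunOn c (T : Set (Fin n)) a)
  refine ⟨Function.update h j (-∑ a ∈ Finset.univ \ {j}, h a), ?_, fun i hi => ?_⟩
  · rw [Finset.sum_update_of_mem (Finset.mem_univ j), neg_add_cancel]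
  · rw [Function.update_of_ne (hj i hi)]
    exact congrArg g (hc.leftInvOn_invFunOn (Finset.mem_coe.mpr hi))

/-- If a family `F` of `k`-element subsets of `Fin n` admits a strong colouring with
at most `k + 1` colours, then `k`-body overlapping tomography of `F` can be performed
with the minimal number of `3^k` Pauli settings: `φ_k(F) ≤ 3^k`. -/
theorem phiFam_le_three_pow_of_strong_colouring (n k : ℕ) (hk : 1 ≤ k) (hkn : k ≤ n)
    (F : Finset (Finset (Fin n))) (hF : ∀ T ∈ F, T.card = k)
    (c : Fin n → Fin (k + 1)) (hc : ∀ T ∈ F, Set.InjOn c (T : Set (Fin n))) :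
    phiFam F ≤ 3 ^ k := by
  classical
  let S : Finset (Fin n → Fin 3) :=
    Finset.univ.image fun v : Fin k → Fin 3 => zeroSumWord v ∘ c
  have hcard : S.card ≤ 3 ^ k := Finset.card_image_le.trans (by simp)
  refine le_trans (Nat.sInf_le ⟨S, rfl, fun T hT g => ?_⟩) hcard
  obtain ⟨j, -, hj⟩ : ∃ j ∈ Finset.univ, j ∉ T.image c := by
    apply Finset.exists_mem_notMem_of_card_lt_card
    calc (T.image c).card ≤ T.card := Finset.card_image_le
      _ < (Finset.univ : Finset (Fin (k + 1))).card := by simp [hF T hT]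
  obtain ⟨w, hw, hwg⟩ := exists_zeroSum_extension T c (hc T hT) j
    (fun i hi h => hj (Finset.mem_image.mpr ⟨i, hi, h⟩)) g
  refine ⟨w ∘ c, Finset.mem_image.mpr ⟨Fin.tail w, Finset.mem_univ _, ?_⟩, hwg⟩
  simp only [zeroSumWord_tail w hw]
end

section
/- Every connected simple graph G on 7 vertices with clique number ω(G) = 4 and chromatic number χ(G) = 5 satisfies φ₂(G) = 11. (There is exactly one such graph up to isomorphism, and for it the clique lower bound φ₂(4) = 9 is not attained: minimal Pauli sets for G have 11 settings, matching φ₂(χ(G)) = φ₂(5) = 11.) -/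
/-! ### The wheel structure of `G` -/

/-- Two lists without a common singleton admit distinct representatives. -/
private lemma exists_distinct_reps {P Q : Fin 4 → Prop} (hP : ∃ k, P k) (hQ : ∃ k, Q k)
    (h : ∀ k, ∃ k', k' ≠ k ∧ (P k' ∨ Q k')) : ∃ k l, k ≠ l ∧ P k ∧ Q l := by
  obtain ⟨k, hk⟩ := hP
  obtain ⟨k', hne, hk' | hk'⟩ := h k
  · obtain ⟨l, hl⟩ := hQ
    by_cases hkl : k = l
    · exact ⟨k', l, by rwa [← hkl], hk', hl⟩
    · exact ⟨k, l, hkl, hk, hl⟩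
  · exact ⟨k, k', hne.symm, hk, hk'⟩

/-- Lists on a triangle, no two of them equal singletons and the three not contained in a common
pair, admit distinct representatives (an instance of Hall's theorem). -/
private lemma exists_distinct_reps_three {P Q R : Fin 4 → Prop}
    (hPQ : ∃ k l, k ≠ l ∧ P k ∧ Q l) (hQR : ∃ k l, k ≠ l ∧ Q k ∧ R l)
    (hPR : ∃ k l, k ≠ l ∧ P k ∧ R l)
    (h : ∀ k l, ∃ m, m ≠ k ∧ m ≠ l ∧ (P m ∨ Q m ∨ R m)) :
    ∃ k l m, k ≠ l ∧ l ≠ m ∧ k ≠ m ∧ P k ∧ Q l ∧ R m := by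
  obtain ⟨k, l, hkl, hk, hl⟩ := hPQ
  obtain ⟨a, b, hab, ha, hb⟩ := hQR
  obtain ⟨c, d, hcd, hc, hd⟩ := hPR
  obtain ⟨m, h1, h2, h3⟩ := h k l
  by_contra! hno
  grind

/-- A path `P - Q - R` whose lists admit no proper list colouring, although no two adjacent lists
are equal singletons, has end lists `{k}` and `{l}` and middle list inside `{k, l}`. -/
private lemma path_obstruction {P Q R : Fin 4 → Prop}
    (hPQ : ∃ k l, k ≠ l ∧ P k ∧ Q l) (hQR : ∃ k l, k ≠ l ∧ Q k ∧ R l)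
    (hno : ∀ k l m, P k → Q l → R m → k = l ∨ l = m) :
    ∃ k l, k ≠ l ∧ (∀ i, P i → i = k) ∧ (∀ i, R i → i = l) ∧ (∀ i, Q i → i = k ∨ i = l) := by
  obtain ⟨k, l, hkl, hk, hl⟩ := hPQ
  obtain ⟨a, b, hab, ha, hb⟩ := hQR
  exact ⟨k, l, hkl, by grind, by grind, by grind⟩

/-- `G` contains two adjacent hubs `x`, `y` joined to every vertex of a closed walk
`c₀ c₁ c₂ c₃ c₄` of length five. -/
private def HasDoubleWheel {V : Type*} (G : SimpleGraph V) : Prop :=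
  ∃ x y : V, ∃ c : Fin 5 → V, G.Adj x y ∧ (∀ i, G.Adj x (c i) ∧ G.Adj y (c i)) ∧
    ∀ i, G.Adj (c i) (c (i + 1))

/-- Three vertices `r`, `s`, `t` outside a four-clique `κ` such that `r - s - t` is a path,
`r` misses only `κ k`, `t` misses only `κ l` and `s` misses at most these two: the other two
vertices of `κ` are hubs for the closed walk `r s t (κ k) (κ l)`. -/
private lemma hasDoubleWheel_of_path {V : Type*} {G : SimpleGraph V} {κ : Fin 4 → V}
    (hκ : ∀ i j, i ≠ j → G.Adj (κ i) (κ j)) {r s t : V} (hrs : G.Adj r s) (hst : G.Adj s t)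
    (h : ∃ k l, k ≠ l ∧ (∀ i, ¬ G.Adj r (κ i) → i = k) ∧ (∀ i, ¬ G.Adj t (κ i) → i = l) ∧
      (∀ i, ¬ G.Adj s (κ i) → i = k ∨ i = l)) : HasDoubleWheel G := by
  obtain ⟨k, l, hkl, hr, ht, hs⟩ := h
  obtain ⟨a, b, hab, hak, hal, hbk, hbl⟩ :
      ∃ a b : Fin 4, a ≠ b ∧ a ≠ k ∧ a ≠ l ∧ b ≠ k ∧ b ≠ l := by
    clear hr ht hs; revert k l; decide
  have hr' : ∀ i, i ≠ k → G.Adj r (κ i) := fun i hi => by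
    by_contra hc; exact hi (hr i hc)
  have ht' : ∀ i, i ≠ l → G.Adj t (κ i) := fun i hi => by
    by_contra hc; exact hi (ht i hc)
  have hs' : ∀ i, i ≠ k → i ≠ l → G.Adj s (κ i) := fun i hi hi' => by
    by_contra hc; exact (hs i hc).elim hi hi'
  refine ⟨κ a, κ b, ![r, s, t, κ k, κ l], hκ a b hab, ?_, ?_⟩
  · intro i
    fin_cases i
    · exact ⟨(hr' a hak).symm, (hr' b hbk).symm⟩
    · exact ⟨(hs' a hak hal).symm, (hs' b hbk hbl).symm⟩
    · exact ⟨(ht' a hal).symm, (ht' b hbl).symm⟩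
    · exact ⟨hκ a k hak, hκ b k hbk⟩
    · exact ⟨hκ a l hal, hκ b l hbl⟩
  · intro i
    fin_cases i
    · exact hrs
    · exact hst
    · exact ht' k hkl
    · exact hκ k l hkl
    · exact (hr' l hkl.symm).symm

private lemma hasDoubleWheel_of_cliqueNum_of_not_colorable (G : SimpleGraph (Fin 7))
    (hω : G.cliqueNum = 4) (hχ : ¬ G.Colorable 4) : HasDoubleWheel G := by
  obtain ⟨K, hK⟩ := G.exists_isNClique_cliqueNum
  rw [hω] at hK
  have no5 : ∀ T, ¬ G.IsNClique 5 T := by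
    intro T hT
    have := hT.isClique.card_le_cliqueNum
    rw [hω, hT.card_eq] at this
    omega
  set e := K.equivFinOfCardEq hK.card_eq
  let κ : Fin 4 → Fin 7 := fun i => (e.symm i : Fin 7)
  have hκ : ∀ i j, i ≠ j → G.Adj (κ i) (κ j) := by
    intro i j hij
    refine hK.isClique (e.symm i).2 (e.symm j).2 fun h => hij ?_
    exact e.symm.injective (Subtype.ext h)
  have hcard : Kᶜ.card = 3 := by
    rw [Finset.card_compl, hK.card_eq, Fintype.card_fin]
  obtain ⟨r, s, t, -, -, -, hrst⟩ := Finset.card_eq_three.1 hcard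
  have hcover : ∀ v, (∃ i, v = κ i) ∨ v = r ∨ v = s ∨ v = t := by
    intro v
    by_cases hv : v ∈ K
    · exact Or.inl ⟨e ⟨v, hv⟩, by simp [κ]⟩
    · have : v ∈ Kᶜ := Finset.mem_compl.2 hv
      rw [hrst] at this
      simpa using Or.inr this
  -- A proper list colouring of `r`, `s`, `t` from their non-neighbours in `κ` extends the
  -- rainbow colouring of `κ` to a four-colouring of `G`.
  have hno : ∀ k l m, ¬ G.Adj r (κ k) → ¬ G.Adj s (κ l) → ¬ G.Adj t (κ m) →
      (G.Adj r s ∧ k = l) ∨ (G.Adj s t ∧ l = m) ∨ (G.Adj r t ∧ k = m) := by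
    intro k l m hk hl hm
    by_contra! hcon
    obtain ⟨h1, h2, h3⟩ := hcon
    have hC : ∀ v, ∃ c : Fin 4, v = κ c ∨ (v = r ∧ c = k) ∨ (v = s ∧ c = l) ∨ (v = t ∧ c = m) := by
      intro v
      rcases hcover v with ⟨i, hi⟩ | h | h | h
      · exact ⟨i, Or.inl hi⟩
      · exact ⟨k, by tauto⟩
      · exact ⟨l, by tauto⟩
      · exact ⟨m, by tauto⟩
    choose C hC using hC
    refine hχ ⟨SimpleGraph.Coloring.mk C ?_⟩
    intro u v huv heq
    have hu := hC u
    have hv := hC v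
    rw [heq] at hu
    have hvu := huv.symm
    have hir : ∀ w, ¬ G.Adj w w := fun w => G.irrefl
    generalize C v = c at hu hv
    rcases hu with hu | ⟨hu, hc⟩ | ⟨hu, hc⟩ | ⟨hu, hc⟩ <;>
      rcases hv with hv | ⟨hv, hc'⟩ | ⟨hv, hc'⟩ | ⟨hv, hc'⟩ <;> subst hu <;> subst hv <;>
      grind
  have hne : ∀ v, ∃ k, ¬ G.Adj v (κ k) := by
    intro v
    by_contra! hall
    refine no5 _ (hK.insert (a := v) fun w hw => ?_)
    simpa [κ] using hall (e ⟨w, hw⟩)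
  have hreps : ∀ u v, G.Adj u v → ∃ k l, k ≠ l ∧ ¬ G.Adj u (κ k) ∧ ¬ G.Adj v (κ l) := by
    intro u v huv
    refine exists_distinct_reps (hne u) (hne v) fun k => ?_
    by_contra! hall
    -- otherwise `u`, `v` and `κ` without `κ k` form a five-clique
    obtain ⟨a, b, c, hab, hac, hbc, ha, hb, hc⟩ :
        ∃ a b c : Fin 4, a ≠ b ∧ a ≠ c ∧ b ≠ c ∧ a ≠ k ∧ b ≠ k ∧ c ≠ k := by
      clear hall; revert k; decide
    have habc := SimpleGraph.is3Clique_triple_iff.2 ⟨hκ a b hab, hκ a c hac, hκ b c hbc⟩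
    refine no5 _ ((habc.insert (a := v) ?_).insert (a := u) ?_)
    · simp [hall a ha, hall b hb, hall c hc]
    · simp [huv, hall a ha, hall b hb, hall c hc]
  have htri : G.Adj r s → G.Adj s t → G.Adj r t → False := by
    intro hrs hst hrt
    obtain ⟨k, l, m, h1, h2, h3, hk, hl, hm⟩ := exists_distinct_reps_three
      (hreps r s hrs) (hreps s t hst) (hreps r t hrt) (by
        intro k l
        by_contra! hall
        -- otherwise `r`, `s`, `t` and two vertices of `κ` form a five-clique
        obtain ⟨a, b, hab, hak, hal, hbk, hbl⟩ :
            ∃ a b : Fin 4, a ≠ b ∧ a ≠ k ∧ a ≠ l ∧ b ≠ k ∧ b ≠ l := by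
          clear hall; revert k l; decide
        obtain ⟨hra, hsa, hta⟩ := hall a hak hal
        obtain ⟨hrb, hsb, htb⟩ := hall b hbk hbl
        have htab := SimpleGraph.is3Clique_triple_iff.2 ⟨hta, htb, hκ a b hab⟩
        refine no5 _ ((htab.insert (a := s) ?_).insert (a := r) ?_)
        · simp [hst, hsa, hsb]
        · simp [hrs, hrt, hra, hrb])
    have := hno k l m hk hl hm
    tauto
  by_cases hrs : G.Adj r s <;> by_cases hst : G.Adj s t <;> by_cases hrt : G.Adj r t
  · exact (htri hrs hst hrt).elim
  · exact hasDoubleWheel_of_path hκ hrs hst (path_obstruction (hreps r s hrs) (hreps s t hst)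
      fun k l m hk hl hm => by have := hno k l m hk hl hm; tauto)
  · exact hasDoubleWheel_of_path hκ hrs.symm hrt (path_obstruction (hreps s r hrs.symm)
      (hreps r t hrt) fun k l m hk hl hm => by have := hno l k m hl hk hm; grind)
  · obtain ⟨k, l, hkl, hk, hl⟩ := hreps r s hrs
    obtain ⟨m, hm⟩ := hne t
    have := hno k l m hk hl hm
    tauto
  · exact hasDoubleWheel_of_path hκ hrt hst.symm (path_obstruction (hreps r t hrt)
      (hreps t s hst.symm) fun k l m hk hl hm => by have := hno k m l hk hm hl; grind)
  · obtain ⟨l, m, hlm, hl, hm⟩ := hreps s t hst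
    obtain ⟨k, hk⟩ := hne r
    have := hno k l m hk hl hm
    tauto
  · obtain ⟨k, m, hkm, hk, hm⟩ := hreps r t hrt
    obtain ⟨l, hl⟩ := hne s
    have := hno k l m hk hl hm
    tauto
  · obtain ⟨k, hk⟩ := hne r
    obtain ⟨l, hl⟩ := hne s
    obtain ⟨m, hm⟩ := hne t
    have := hno k l m hk hl hm
    tauto

/-! ### At least eleven settings -/

/-- The values of a vertex on at most ten settings, indexed by the values of the two hubs: `m a b`
is the value on the setting where the hubs take the (shifted) values `a` and `b`, and `k` is the
value on a tenth setting, whose shifted hub values are `0` and `0`. The fields are consequences of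
the vertex forming all nine pairs with each hub; the condition for the value `0` of the second hub
is not recorded. -/
private structure NearLatin (m : Fin 3 → Fin 3 → Fin 3) (k : Fin 3) : Prop where
  row_zero : ∀ v, (∃ b, m 0 b = v) ∨ k = v
  row : ∀ a, a ≠ 0 → Function.Injective (m a)
  col : ∀ b, b ≠ 0 → Function.Injective fun a => m a b

/-- Injectivity of rows and columns `1`, `2` forces a repetition on a diagonal of the lower right
two-by-two block. -/
private lemma NearLatin.diag_or_antidiag {m : Fin 3 → Fin 3 → Fin 3} {k : Fin 3}
    (h : NearLatin m k) : m 1 1 = m 2 2 ∨ m 1 2 = m 2 1 := by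
  have h1 : m 1 1 ≠ m 1 2 := (h.row 1 (by decide)).ne (by decide)
  have h2 : m 2 1 ≠ m 2 2 := (h.row 2 (by decide)).ne (by decide)
  have h3 : m 1 1 ≠ m 2 1 := (h.col 1 (by decide)).ne (by decide)
  have h4 : m 1 2 ≠ m 2 2 := (h.col 2 (by decide)).ne (by decide)
  generalize m 1 1 = x at *
  generalize m 1 2 = y at *
  generalize m 2 1 = z at *
  generalize m 2 2 = w at *
  clear h
  revert x y z w
  decide

/-- Two columns repeating on the same diagonal (`p = 1, q = 2`) or antidiagonal (`p = 2, q = 1`)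
do not form all nine pairs. -/
private lemma NearLatin.not_both {m n : Fin 3 → Fin 3 → Fin 3} {k l : Fin 3}
    (hm : NearLatin m k) (hn : NearLatin n l)
    (hmn : ∀ u v, (∃ a b, m a b = u ∧ n a b = v) ∨ (k = u ∧ l = v))
    {p q : Fin 3} (hpq : p ≠ q) (hp : p ≠ 0) (hq : q ≠ 0)
    (h1 : m 1 p = m 2 q) (h2 : n 1 p = n 2 q) : False := by
  have cov : ∀ b : Fin 3, b = 0 ∨ b = p ∨ b = q := by
    clear h1 h2; revert p q; decide
  -- the repeated value of a column occurs only on that diagonal and on the two `(0, 0)` settings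
  have key : ∀ (m : Fin 3 → Fin 3 → Fin 3) (k : Fin 3), NearLatin m k → m 1 p = m 2 q →
      ∀ a b, m a b = m 1 p → (a = 0 ∧ b = 0) ∨ (a = 1 ∧ b = p) ∨ (a = 2 ∧ b = q) := by
    intro m k hm h a b hab
    have ha : a = 0 ∨ a = 1 ∨ a = 2 := by clear hab; revert a; decide
    rcases ha with rfl | rfl | rfl
    · rcases cov b with rfl | rfl | rfl
      · simp
      · exact absurd (hm.col _ hp hab) (by decide)
      · exact absurd (hm.col _ hq (hab.trans h)) (by decide)
    · exact Or.inr (Or.inl ⟨rfl, hm.row 1 (by decide) hab⟩)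
    · exact Or.inr (Or.inr ⟨rfl, hm.row 2 (by decide) (hab.trans h)⟩)
  -- hence the values of `n` on the two `(0, 0)` settings would exhaust `Fin 3`
  have hall : ∀ v, n 0 0 = v ∨ l = v := by
    intro v
    by_cases hv : v = n 1 p
    · rcases hn.row_zero v with ⟨b, hb⟩ | h
      · rcases key n l hn h2 0 b (hb.trans hv) with h | h | h
        · rw [h.2] at hb; exact Or.inl hb
        · exact absurd h.1 (by decide)
        · exact absurd h.1 (by decide)
      · exact Or.inr h
    · rcases hmn (m 1 p) v with ⟨a, b, hab, hab'⟩ | h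
      · rcases key m k hm h1 a b hab with ⟨rfl, rfl⟩ | ⟨rfl, rfl⟩ | ⟨rfl, rfl⟩
        · exact Or.inl hab'
        · exact absurd hab'.symm hv
        · exact absurd (hab'.symm.trans h2.symm) hv
      · exact Or.inr h.2
  generalize n 0 0 = x at hall
  clear * - hall
  revert x l
  decide

/-- Among at most ten settings covering the pair `x, y`, nine realise each pair of values once;
at most one setting `e` is left over, and shifting values makes its pair `(0, 0)`. -/
private lemma exists_grid {V : Type*} {S : Finset (V → Fin 3)} (hS : S.card ≤ 10) {x y : V}
    (hxy : ∀ a b : Fin 3, ∃ f ∈ S, f x = a ∧ f y = b) :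
    ∃ (g : Fin 3 → Fin 3 → V → Fin 3) (e : V → Fin 3) (a₀ b₀ : Fin 3),
      (∀ a b, g a b x = a₀ + a ∧ g a b y = b₀ + b) ∧ e x = a₀ ∧ e y = b₀ ∧
      ∀ f ∈ S, (∃ a b, f = g a b) ∨ f = e := by
  classical
  choose g hgS hgx hgy using hxy
  let T : Finset (V → Fin 3) := Finset.univ.image fun p : Fin 3 × Fin 3 => g p.1 p.2
  have hT : T.card = 9 := by
    rw [Finset.card_image_of_injective]
    · simp
    · rintro ⟨a, b⟩ ⟨c, d⟩ h
      have hx := congrFun h x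
      have hy := congrFun h y
      simp only [hgx, hgy] at hx hy
      rw [hx, hy]
  have hTS : T ⊆ S := by
    intro f hf
    obtain ⟨p, -, rfl⟩ := Finset.mem_image.1 hf
    exact hgS _ _
  have hle : (S \ T).card ≤ 1 := by
    rw [Finset.card_sdiff_of_subset hTS]; omega
  obtain ⟨e, he⟩ : ∃ e, ∀ f ∈ S, (∃ a b, f = g a b) ∨ f = e := by
    have hmem : ∀ f ∈ S, f ∉ S \ T → ∃ a b, f = g a b := by
      intro f hf hf'
      have : f ∈ T := by
        by_contra h; exact hf' (Finset.mem_sdiff.2 ⟨hf, h⟩)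
      obtain ⟨p, -, rfl⟩ := Finset.mem_image.1 this
      exact ⟨p.1, p.2, rfl⟩
    rcases (S \ T).eq_empty_or_nonempty with h | ⟨e, heT⟩
    · exact ⟨g 0 0, fun f hf => Or.inl (hmem f hf (by simp [h]))⟩
    · refine ⟨e, fun f hf => ?_⟩
      by_cases hf' : f ∈ S \ T
      · exact Or.inr (Finset.card_le_one.1 hle f hf' e heT)
      · exact Or.inl (hmem f hf hf')
  refine ⟨fun a b => g (e x + a) (e y + b), e, e x, e y, fun a b => ⟨hgx _ _, hgy _ _⟩, rfl, rfl,
    fun f hf => (he f hf).imp_left ?_⟩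
  rintro ⟨a, b, rfl⟩
  exact ⟨a - e x, b - e y, by simp⟩

private lemma eleven_le_card_of_hasDoubleWheel {V : Type*} {G : SimpleGraph V}
    (hG : HasDoubleWheel G) {S : Finset (V → Fin 3)} (hS : IsPauliSet G S) : 11 ≤ S.card := by
  by_contra hlt
  obtain ⟨x, y, c, hxy, hhub, hcyc⟩ := hG
  obtain ⟨g, e, a₀, b₀, hg, hex, hey, hcov⟩ :=
    exists_grid (show S.card ≤ 10 by omega) (hS x y hxy)
  have hrow : ∀ i a v, (∃ b, g a b (c i) = v) ∨ (a = 0 ∧ e (c i) = v) := by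
    intro i a v
    obtain ⟨f, hf, hfx, hfv⟩ := hS _ _ (hhub i).1 (a₀ + a) v
    rcases hcov f hf with ⟨a', b, rfl⟩ | rfl
    · rw [(hg a' b).1, add_right_inj] at hfx
      exact Or.inl ⟨b, by rw [← hfx, hfv]⟩
    · rw [hex, left_eq_add] at hfx
      exact Or.inr ⟨hfx, hfv⟩
  have hcol : ∀ i b v, (∃ a, g a b (c i) = v) ∨ (b = 0 ∧ e (c i) = v) := by
    intro i b v
    obtain ⟨f, hf, hfy, hfv⟩ := hS _ _ (hhub i).2 (b₀ + b) v
    rcases hcov f hf with ⟨a, b', rfl⟩ | rfl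
    · rw [(hg a b').2, add_right_inj] at hfy
      exact Or.inl ⟨a, by rw [← hfy, hfv]⟩
    · rw [hey, left_eq_add] at hfy
      exact Or.inr ⟨hfy, hfv⟩
  have hL : ∀ i, NearLatin (fun a b => g a b (c i)) (e (c i)) := by
    intro i
    refine ⟨fun v => (hrow i 0 v).imp_right And.right, fun a ha => ?_, fun b hb => ?_⟩
    · refine Finite.injective_iff_surjective.2 fun v => ?_
      exact (hrow i a v).resolve_right fun h => ha h.1
    · refine Finite.injective_iff_surjective.2 fun v => ?_
      exact (hcol i b v).resolve_right fun h => hb h.1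
  -- the two diagonals would properly two-colour a closed walk of odd length
  have halt : ∀ i, (g 1 1 (c i) = g 2 2 (c i)) ↔ ¬ (g 1 1 (c (i + 1)) = g 2 2 (c (i + 1))) := by
    intro i
    have hpair : ∀ u v, (∃ a b, g a b (c i) = u ∧ g a b (c (i + 1)) = v) ∨
        (e (c i) = u ∧ e (c (i + 1)) = v) := by
      intro u v
      obtain ⟨f, hf, hu, hv⟩ := hS _ _ (hcyc i) u v
      rcases hcov f hf with ⟨a, b, rfl⟩ | rfl
      · exact Or.inl ⟨a, b, hu, hv⟩
      · exact Or.inr ⟨hu, hv⟩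
    have hd := (hL i).not_both (hL (i + 1)) hpair (p := 1) (q := 2)
      (by decide) (by decide) (by decide)
    have ha := (hL i).not_both (hL (i + 1)) hpair (p := 2) (q := 1)
      (by decide) (by decide) (by decide)
    have h1 := (hL i).diag_or_antidiag
    have h2 := (hL (i + 1)).diag_or_antidiag
    tauto
  have h0 := halt 0
  have h1 := halt 1
  have h2 := halt 2
  have h3 := halt 3
  have h4 := halt 4
  simp only [Fin.reduceAdd] at h0 h1 h2 h3 h4
  tauto

/-! ### Eleven settings suffice -/

/-- Eleven settings on five vertices, one per row, covering all nine values of every pair. -/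
private def elevenSettings : Fin 11 → Fin 5 → Fin 3 :=
  ![![0, 0, 0, 0, 0], ![0, 0, 1, 2, 1], ![0, 1, 1, 1, 2], ![0, 2, 2, 2, 2], ![1, 0, 1, 0, 2],
    ![1, 1, 2, 2, 0], ![1, 2, 0, 1, 1], ![2, 0, 2, 1, 0], ![2, 1, 0, 2, 2], ![2, 1, 2, 0, 1],
    ![2, 2, 1, 0, 0]]

private lemma elevenSettings_cover :
    ∀ i j : Fin 5, i ≠ j → ∀ a b : Fin 3, ∃ r, elevenSettings r i = a ∧ elevenSettings r j = b := by
  decide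

/-- Composing the eleven settings with a five-colouring gives a Pauli set. -/
private lemma exists_isPauliSet_of_colorable {V : Type*} {G : SimpleGraph V} (h : G.Colorable 5) :
    ∃ S : Finset (V → Fin 3), S.card ≤ 11 ∧ IsPauliSet G S := by
  classical
  obtain ⟨C⟩ := h
  refine ⟨Finset.univ.image fun r v => elevenSettings r (C v), ?_, ?_⟩
  · exact Finset.card_image_le.trans (by simp)
  · intro i j hij a b
    obtain ⟨r, hr⟩ := elevenSettings_cover _ _ (C.valid hij) a b
    exact ⟨fun v => elevenSettings r (C v), Finset.mem_image.2 ⟨r, Finset.mem_univ r, rfl⟩, hr⟩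

/-- Every connected simple graph on 7 vertices with clique number 4 and chromatic
number 5 satisfies `φ₂(G) = 11`: the clique lower bound `φ₂(4) = 9` is not attained,
and minimal Pauli sets for `G` match `φ₂(χ(G)) = φ₂(5) = 11`. -/
theorem phi2G_eq_eleven (G : SimpleGraph (Fin 7)) (hconn : G.Connected)
    (hω : G.cliqueNum = 4) (hχ : G.chromaticNumber = 5) :
    phi2G G = 11 := by
  have h5 : G.Colorable 5 := SimpleGraph.chromaticNumber_le_iff_colorable.1 hχ.le
  have h4 : ¬ G.Colorable 4 := fun h => by
    have := h.chromaticNumber_le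
    rw [hχ] at this
    exact absurd this (by decide)
  have hW := hasDoubleWheel_of_cliqueNum_of_not_colorable G hω h4
  obtain ⟨S, hcard, hS⟩ := exists_isPauliSet_of_colorable h5
  apply le_antisymm
  · have hle : phi2G G ≤ S.card := Nat.sInf_le ⟨S, rfl, hS⟩
    exact hle.trans hcard
  · refine le_csInf ⟨_, S, rfl, hS⟩ ?_
    rintro N ⟨T, rfl, hT⟩
    exact eleven_le_card_of_hasDoubleWheel hW hT
end

section
/- Let H₇ be the family of seven 3-element subsets of Fin 7 given by the consecutive triples of the 7-cycle, i.e., H₇ = {{i, i+1 mod 7, i+2 mod 7} : i ∈ Fin 7}. Then the minimal number of Pauli settings for three-body partial tomography of H₇ is exactly 27: φ₃(H₇) = 27. -/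
/-- The family `H₇` of consecutive triples of the 7-cycle:
`{{i, i+1, i+2} : i ∈ Fin 7}` (addition mod 7). -/
def H7 : Finset (Finset (Fin 7)) :=
  Finset.image (fun i : Fin 7 => ({i, i + 1, i + 2} : Finset (Fin 7))) Finset.univ

/-- The linear word `(a, b, c, a, b, c, a + b + c)`; addition in `Fin 3` is modulo 3. -/
def ringWord (p : Fin 3 × Fin 3 × Fin 3) : Fin 7 → Fin 3 :=
  ![p.1, p.2.1, p.2.2, p.1, p.2.1, p.2.2, p.1 + p.2.1 + p.2.2]

theorem ringWord_injective : Function.Injective ringWord := by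
  rintro ⟨a, b, c⟩ ⟨a', b', c'⟩ h
  have h0 : a = a' := congrFun h 0
  have h1 : b = b' := congrFun h 1
  have h2 : c = c' := congrFun h 2
  rw [h0, h1, h2]

/-- Any three cyclically consecutive coordinates of `ringWord` can be prescribed. -/
theorem exists_ringWord (i : Fin 7) (g : Fin 7 → Fin 3) :
    ∃ p, ringWord p i = g i ∧ ringWord p (i + 1) = g (i + 1) ∧
      ringWord p (i + 2) = g (i + 2) := by
  have key : ∀ i : Fin 7, ∀ x y z : Fin 3, ∃ p, ringWord p i = x ∧
      ringWord p (i + 1) = y ∧ ringWord p (i + 2) = z := by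
    intro i x y z
    fin_cases i
    · exact ⟨(x, y, z), rfl, rfl, rfl⟩
    · exact ⟨(z, x, y), rfl, rfl, rfl⟩
    · exact ⟨(y, z, x), rfl, rfl, rfl⟩
    · exact ⟨(x, y, z), rfl, rfl, rfl⟩
    · refine ⟨(z - x - y, x, y), rfl, rfl, ?_⟩
      change z - x - y + x + y = z
      abel
    · refine ⟨(z, y - x - z, x), rfl, ?_, rfl⟩
      change z + (y - x - z) + x = y
      abel
    · refine ⟨(y, z, x - y - z), ?_, rfl, rfl⟩
      change y + z + (x - y - z) = x
      abel
  exact key i _ _ _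

theorem isPauliFamSet_ringWord :
    IsPauliFamSet H7 (Finset.univ.image ringWord) := by
  intro T hT g
  obtain ⟨i, -, rfl⟩ := Finset.mem_image.1 hT
  obtain ⟨p, h0, h1, h2⟩ := exists_ringWord i g
  refine ⟨ringWord p, Finset.mem_image_of_mem _ (Finset.mem_univ _), ?_⟩
  intro j hj
  simp only [Finset.mem_insert, Finset.mem_singleton] at hj
  rcases hj with rfl | rfl | rfl <;> assumption

theorem le_card_of_isPauliFamSet (S : Finset (Fin 7 → Fin 3)) (hS : IsPauliFamSet H7 S) :
    27 ≤ S.card := by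
  have hsub : (Finset.univ : Finset (Fin 3 × Fin 3 × Fin 3)) ⊆
      S.image (fun f => (f 0, f 1, f 2)) := by
    rintro ⟨a, b, c⟩ -
    obtain ⟨f, hf, h⟩ := hS {0, 1, 2} (Finset.mem_image.2 ⟨0, Finset.mem_univ _, rfl⟩)
      ![a, b, c, 0, 0, 0, 0]
    have h0 : f 0 = a := h 0 (by simp)
    have h1 : f 1 = b := h 1 (by simp)
    have h2 : f 2 = c := h 2 (by simp)
    exact Finset.mem_image.2 ⟨f, hf, by simp only [h0, h1, h2]⟩
  have h := (Finset.card_le_card hsub).trans Finset.card_image_le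
  simpa using h

/-- The minimal number of Pauli settings for three-body partial tomography of the
seven-qubit ring `H₇` is exactly 27: `φ₃(H₇) = 27`. -/
theorem phiFam_H7 : phiFam H7 = 27 := by
  have hmem : 27 ∈ {N : ℕ | ∃ S : Finset (Fin 7 → Fin 3), S.card = N ∧ IsPauliFamSet H7 S} :=
    ⟨_, by rw [Finset.card_image_of_injective _ ringWord_injective]; simp,
      isPauliFamSet_ringWord⟩
  refine le_antisymm (Nat.sInf_le hmem) (le_csInf ⟨_, hmem⟩ ?_)
  rintro N ⟨S, rfl, hS⟩
  exact le_card_of_isPauliFamSet S hS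
end
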